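/- arXiv:math/0310473 — 3 statements merged into one kernel-verified Lean document; each statement's English description precedes it below -/
import Mathlib

section
/- Let K be a finite n-dimensional simplicial complex embedded in Euclidean space, with n ≥ 2, and suppose that each (n−1)-simplex of K is a face of precisely two n-simplices of K. Then for every p-simplex τ^p of K with 0 ≤ p ≤ n−2, the stratification rank satisfies r(τ^p) = 1. -/
open Filter MeasureTheory Geometry
open scoped BigOperators

noncomputable section

attribute [local instance 0] Classical.propDecidable

namespace AngleDefectPaper

/-- `N`-dimensional Euclidean space. -/
abbrev Euc (N : ℕ) : Type := EuclideanSpace ℝ (Fin N)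

variable {N : ℕ}

/-- The open simplex determined by a finite set of points: the intrinsic
(relative) interior of its convex hull. -/
def openSimplex (s : Finset (Euc N)) : Set (Euc N) :=
  intrinsicInterior ℝ (convexHull ℝ (s : Set (Euc N)))

/-- The normalized solid angle `α(η, σ)` of the simplex `σ` along its face `η`:
the fraction of a small sphere (in the affine span of `σ`) centered at a point of
the open face `η` that lies in `σ`, normalized so that the full sphere has
measure `1`.  It is computed as the limiting fraction of a small ambient ball
centered at the centroid of `η` that lies in the cylinder obtained by thickening
`σ` in the directions orthogonal to its affine span. -/
def solidAngle (η σ : Finset (Euc N)) : ℝ :=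
  limUnder (nhdsWithin (0 : ℝ) (Set.Ioi 0)) fun ε =>
    (volume (Metric.ball (η.centroid ℝ id) ε ∩
      {y : Euc N | ∃ c ∈ convexHull ℝ (σ : Set (Euc N)),
        ∃ w ∈ (vectorSpan ℝ (σ : Set (Euc N)))ᗮ, y = c + w})).toReal /
    (volume (Metric.ball (η.centroid ℝ id) ε)).toReal

/-- `Tcone r` is (a realization in the plane of) the open cone on `r` points:
`r` half-open segments emanating from the origin in pairwise distinct
directions, glued at the origin.  For `r = 0` it is a single point. -/
def Tcone (r : ℕ) : Set (ℝ × ℝ) :=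
  {0} ∪ ⋃ k ∈ Finset.range r,
    {p : ℝ × ℝ | ∃ t : ℝ, 0 ≤ t ∧ t < 1 ∧ p = t • ((1 : ℝ), (k : ℝ))}

/-- `x` has a neighborhood in `S` homeomorphic to `T_r × ℝ^{n-1}`, with the
homeomorphism taking `x` into the apex set `{cone point} × ℝ^{n-1}`. -/
def HasConeNbhd (n r : ℕ) (S : Set (Euc N)) (x : Euc N) : Prop :=
  ∃ U : Set (Euc N), U ∈ nhdsWithin x S ∧ U ⊆ S ∧
    ∃ h : U ≃ₜ (Tcone r) × EuclideanSpace ℝ (Fin (n - 1)),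
      ∀ hx : x ∈ U, ((h ⟨x, hx⟩).1 : ℝ × ℝ) = 0

/-- The set of points of `|K|` having a neighborhood of cone type `r`. -/
def csetAux (n : ℕ) (K : SimplicialComplex ℝ (Euc N)) (r : ℕ) : Set (Euc N) :=
  {x | x ∈ K.space ∧ HasConeNbhd n r K.space x}

/-- The sets `C_r(K)`: for `r ≠ 2` the points with a cone-type-`r` neighborhood,
and `C_2(K)` is the complement in `|K|` of the union of the others. -/
def cset (n : ℕ) (K : SimplicialComplex ℝ (Euc N)) (r : ℕ) : Set (Euc N) :=
  if r = 2 then K.space \ ⋃ r' ∈ {r' : ℕ | r' ≠ 2}, csetAux n K r'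
  else csetAux n K r

/-- The stratification rank `r(η) = r/2`, where `C_r(K)` is the (unique) set of
the stratification containing the open simplex of `η`. -/
def strRank (n : ℕ) (K : SimplicialComplex ℝ (Euc N)) (η : Finset (Euc N)) : ℝ :=
  if h : ∃ r : ℕ, r ≠ 2 ∧ openSimplex η ⊆ csetAux n K r then (h.choose : ℝ) / 2
  else 1

/-- The set of `n`-simplices of `K` having `η` as a face. -/
def nSimplicesOn (n : ℕ) (K : SimplicialComplex ℝ (Euc N)) (η : Finset (Euc N)) :
    Set (Finset (Euc N)) :=
  {σ | σ ∈ K.faces ∧ σ.card = n + 1 ∧ η ⊆ σ}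

/-- The generalized angle defect `D(η) = r(η) - Σ_{σⁿ ≻ η} α(η, σⁿ)`. -/
def defect (n : ℕ) (K : SimplicialComplex ℝ (Euc N)) (η : Finset (Euc N)) : ℝ :=
  strRank n K η - ∑ᶠ σ ∈ nSimplicesOn n K η, solidAngle η σ

/-- The angle defect sequence `a_m = 4 B_{m+2} (2^{m+2} - 1)/(m+2)`, where `B_k`
is the `k`-th Bernoulli number (with the convention `B_1 = -1/2`). -/
def ads (m : ℕ) : ℚ :=
  4 * bernoulli (m + 2) * (2 ^ (m + 2) - 1) / (m + 2)

/-- The ascending stratified curvature of a simplex `τ` (of dimension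
`p = τ.card - 1`) in the `n`-dimensional complex `K`. -/
def asc (n : ℕ) (K : SimplicialComplex ℝ (Euc N)) (τ : Finset (Euc N)) : ℝ :=
  (ads (τ.card - 1) : ℝ) * defect n K τ +
    (ads (τ.card - 1) : ℝ) / 2 *
      ∑ i ∈ Finset.Icc τ.card n,
        (-1 : ℝ) ^ (i - (τ.card - 1)) *
          ∑ᶠ η ∈ {η : Finset (Euc N) | η ∈ K.faces ∧ η.card = i + 1 ∧ τ ⊆ η},
            defect n K η

/-- The stratified Euler characteristic `χˢ(K) = Σ_{η ∈ K} r(η) (-1)^{dim η}`. -/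
def stratEuler (n : ℕ) (K : SimplicialComplex ℝ (Euc N)) : ℝ :=
  ∑ᶠ η ∈ K.faces, strRank n K η * (-1 : ℝ) ^ (η.card - 1)

/-- `fcount F k` is the number of `k`-dimensional simplices in `F`. -/
def fcount (F : Set (Finset (Euc N))) (k : ℕ) : ℕ :=
  {s ∈ F | s.card = k + 1}.ncard

/-- The combinatorial Euler characteristic `χ(F) = Σ_k (-1)^k f_k(F)`. -/
def eulerChar (F : Set (Finset (Euc N))) : ℤ :=
  ∑ᶠ k : ℕ, (-1 : ℤ) ^ k * fcount F k

/-- The link of `η` in `K`: all simplices `ω` of `K` disjoint from `η` such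
that the join `η ∗ ω` is a simplex of `K`. -/
def linkFaces (K : SimplicialComplex ℝ (Euc N)) (η : Finset (Euc N)) :
    Set (Finset (Euc N)) :=
  {ω | ω ∈ K.faces ∧ Disjoint η ω ∧ η ∪ ω ∈ K.faces}

/-- `K` is an `n`-dimensional simplicial complex. -/
def IsNDim (n : ℕ) (K : SimplicialComplex ℝ (Euc N)) : Prop :=
  (∀ s ∈ K.faces, s.card ≤ n + 1) ∧ ∃ s ∈ K.faces, s.card = n + 1

/-- `L` is a subdivision of `K`: same underlying space, and every open simplex
of `L` is contained in an open simplex of `K`. -/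
def IsSubdivision (K L : SimplicialComplex ℝ (Euc N)) : Prop :=
  L.space = K.space ∧ ∀ s ∈ L.faces, ∃ t ∈ K.faces, openSimplex s ⊆ openSimplex t


section Brouwer

set_option linter.unusedSectionVars false

variable {E : Type*} [NormedAddCommGroup E] [InnerProductSpace ℝ E] [FiniteDimensional ℝ E]
  [MeasurableSpace E] [BorelSpace E]

lemma det_one_add_pos (A : E →L[ℝ] E) (hA : ‖A‖ < 1) : 0 < (1 + A : E →L[ℝ] E).det := by
  have hne : ∀ s ∈ Set.Icc (0:ℝ) 1, (1 + s • A : E →L[ℝ] E).det ≠ 0 := by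
    intro s hs h0
    have := LinearMap.bot_lt_ker_of_det_eq_zero h0
    obtain ⟨v, hv, hv0⟩ := (Submodule.ne_bot_iff _).1 this.ne'
    have h1 : v + s • A v = 0 := by simpa using hv
    have h2 : ‖v‖ = s * ‖A v‖ := by
      have := congrArg norm (eq_neg_of_add_eq_zero_left h1)
      rwa [norm_neg, norm_smul, Real.norm_of_nonneg hs.1] at this
    have h3 := A.le_opNorm v
    have h4 : 0 < ‖v‖ := norm_pos_iff.2 hv0
    nlinarith [hs.1, hs.2, norm_nonneg (A v)]
  have hc : Continuous (fun s : ℝ => (1 + s • A : E →L[ℝ] E).det) :=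
    ContinuousLinearMap.continuous_det.comp (by fun_prop)
  by_contra hcon
  push Not at hcon
  have := intermediate_value_Icc' (zero_le_one) hc.continuousOn
  have h0 : (0:ℝ) ∈ Set.Icc ((1 + (1:ℝ) • A : E →L[ℝ] E).det) ((1 + (0:ℝ) • A : E →L[ℝ] E).det) := by
    refine ⟨by simpa using hcon, ?_⟩
    simp [ContinuousLinearMap.det]
  obtain ⟨s, hs, hs'⟩ := this h0
  exact hne s hs hs'

/-- determinants of a pencil are polynomial. -/
lemma det_pencil (A : E →L[ℝ] E) : ∃ p : Polynomial ℝ, p.natDegree ≤ Module.finrank ℝ E ∧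
    ∀ t : ℝ, (1 + t • A : E →L[ℝ] E).det = p.eval t := by
  let b := Module.finBasis ℝ E
  let M := LinearMap.toMatrix b b (A : E →ₗ[ℝ] E)
  refine ⟨_, (Polynomial.natDegree_det_X_add_C_le M 1).trans (by simp), fun t => ?_⟩
  have : (1 + t • A : E →L[ℝ] E).det = LinearMap.det ((1 + t • A : E →L[ℝ] E) : E →ₗ[ℝ] E) := rfl
  rw [this, ← LinearMap.det_toMatrix b, ← Polynomial.coe_evalRingHom, RingHom.map_det]
  congr 1
  ext i j
  by_cases hij : i = j
  · subst hij
    simp [M, LinearMap.toMatrix_apply]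
    ring
  · simp [M, LinearMap.toMatrix_apply, hij]
    ring

lemma integral_det_small {h : E → E} {L : NNReal} (hL : LipschitzWith L h) {R : ℝ}
    (h0 : ∀ x, x ∉ Metric.ball (0:E) R → h x = 0) (hd : DifferentiableOn ℝ h (Metric.ball 0 R))
    {t : ℝ} (ht0 : 0 ≤ t) (ht : t * L < 1) :
    ∫ x in Metric.ball (0:E) R, (1 + t • fderiv ℝ h x : E →L[ℝ] E).det
      = volume.real (Metric.ball (0:E) R) := by
  have hLip : ∀ x y, ‖t • h x - t • h y‖ ≤ (t * L) * ‖x - y‖ := by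
    intro x y
    rw [← smul_sub, norm_smul, Real.norm_of_nonneg ht0, mul_assoc]
    gcongr
    exact hL.norm_sub_le x y
  have hinj : Function.Injective (fun x => x + t • h x) := by
    intro x y hxy
    have h1 : x - y = -(t • h x - t • h y) := by
      simp only at hxy
      rw [neg_sub, sub_eq_sub_iff_add_eq_add, hxy, add_comm]
    have h2 := hLip x y
    rw [← norm_neg, ← h1] at h2
    by_contra hne
    have : 0 < ‖x - y‖ := norm_pos_iff.2 (sub_ne_zero.2 hne)
    nlinarith
  have hsurj : ∀ y, ∃ x, x + t • h x = y := by
    intro y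
    have : ContractingWith ⟨t * L, by positivity⟩ (fun x => y - t • h x) := by
      refine ⟨by exact_mod_cast ht, LipschitzWith.of_dist_le_mul fun a b => ?_⟩
      rw [dist_eq_norm, dist_eq_norm, sub_sub_sub_cancel_left, norm_sub_rev]
      exact hLip a b
    refine ⟨ContractingWith.fixedPoint _ this, ?_⟩
    have := this.fixedPoint_isFixedPt
    rw [← eq_sub_iff_add_eq]
    exact this.symm
  have himg : (fun x => x + t • h x) '' (Metric.ball 0 R) = Metric.ball 0 R := by
    ext y
    constructor
    · rintro ⟨x, hx, rfl⟩
      by_contra hy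
      have h1 := h0 _ hy
      have h2 : x + t • h x = x := hinj (by simp [h1])
      simp only [h2] at hy
      exact hy hx
    · intro hy
      obtain ⟨x, hx⟩ := hsurj y
      refine ⟨x, ?_, hx⟩
      by_contra hx'
      rw [h0 x hx'] at hx
      simp at hx
      exact hx' (hx ▸ hy)
  have hder : ∀ x ∈ Metric.ball (0:E) R, HasFDerivWithinAt (fun x => x + t • h x)
      (1 + t • fderiv ℝ h x) (Metric.ball 0 R) x := by
    intro x hx
    have := (hd.differentiableAt (Metric.isOpen_ball.mem_nhds hx)).hasFDerivAt
    exact ((hasFDerivAt_id x).add (this.const_smul t)).hasFDerivWithinAt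
  have key := integral_image_eq_integral_abs_det_fderiv_smul volume measurableSet_ball hder
    hinj.injOn (fun _ => (1:ℝ))
  rw [himg] at key
  simp only [smul_eq_mul, mul_one, integral_const, measureReal_restrict_apply_univ] at key
  rw [key]
  refine setIntegral_congr_fun measurableSet_ball fun x hx => ?_
  rw [abs_of_pos]
  apply det_one_add_pos
  rw [norm_smul, Real.norm_of_nonneg ht0]
  refine lt_of_le_of_lt ?_ ht
  gcongr
  exact norm_fderiv_le_of_lipschitz ℝ hL

lemma integral_det {h : E → E} {L : NNReal} (hL : LipschitzWith L h) {R : ℝ}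
    (h0 : ∀ x, x ∉ Metric.ball (0:E) R → h x = 0) (hd : DifferentiableOn ℝ h (Metric.ball 0 R)) :
    ∫ x in Metric.ball (0:E) R, (1 + fderiv ℝ h x : E →L[ℝ] E).det
      = volume.real (Metric.ball (0:E) R) := by
  set d := Module.finrank ℝ E
  let v : Fin (d+1) → ℝ := fun i => (i:ℝ) / ((d+1) * (L+1))
  have hv : Set.InjOn v (Finset.univ : Finset (Fin (d+1))) := by
    intro i _ j _ hij
    have : ((d+1) * (L+1) : ℝ) ≠ 0 := by positivity
    simp only [v] at hij
    field_simp at hij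
    exact Fin.ext (by exact_mod_cast hij)
  have hv0 : ∀ i, 0 ≤ v i := fun i => by positivity
  have hv1 : ∀ i, v i * L < 1 := fun i => by
    have hi : ((i : ℕ) : ℝ) < d + 1 := by exact_mod_cast i.2
    simp only [v]
    rw [div_mul_eq_mul_div, div_lt_one (by positivity)]
    have : (0:ℝ) ≤ L := L.2
    nlinarith
  have hpt : ∀ x, (1 + fderiv ℝ h x : E →L[ℝ] E).det =
      ∑ i, (Lagrange.basis Finset.univ v i).eval 1 * (1 + v i • fderiv ℝ h x : E →L[ℝ] E).det := by
    intro x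
    obtain ⟨p, hp, hpe⟩ := det_pencil (fderiv ℝ h x)
    have h1 := hpe 1
    rw [one_smul] at h1
    rw [h1]
    simp only [hpe]
    have hdeg : p.degree < (Finset.univ : Finset (Fin (d+1))).card := by
      refine lt_of_le_of_lt Polynomial.degree_le_natDegree ?_
      rw [Finset.card_univ, Fintype.card_fin]
      exact_mod_cast Nat.lt_succ_of_le hp
    conv_lhs => rw [Lagrange.eq_interpolate hv hdeg]
    simp [Lagrange.interpolate_apply, Polynomial.eval_finsetSum, mul_comm]
  have hintg : ∀ i, IntegrableOn (fun x => (1 + v i • fderiv ℝ h x : E →L[ℝ] E).det)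
      (Metric.ball (0:E) R) := by
    intro i
    obtain ⟨C, hC⟩ := (isCompact_closedBall (0 : E →L[ℝ] E) L).exists_bound_of_continuousOn
      (f := fun A : E →L[ℝ] E => (1 + v i • A).det)
      (ContinuousLinearMap.continuous_det.comp (by fun_prop)).continuousOn
    refine Measure.integrableOn_of_bounded (M := C) measure_ball_lt_top.ne ?_ ?_
    · apply Measurable.aestronglyMeasurable
      exact (ContinuousLinearMap.continuous_det.comp
        (by fun_prop : Continuous fun A : E →L[ℝ] E => 1 + v i • A)).measurable.comp
        (measurable_fderiv ℝ h)
    · refine Eventually.of_forall fun x => hC _ ?_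
      rw [mem_closedBall_zero_iff]
      exact norm_fderiv_le_of_lipschitz ℝ hL
  simp only [hpt]
  rw [integral_finsetSum _ fun i _ => (hintg i).const_mul _]
  simp only [integral_const_mul, integral_det_small hL h0 hd (hv0 _) (hv1 _)]
  rw [← Finset.sum_mul, ← Polynomial.eval_finsetSum, Lagrange.sum_basis hv ⟨0, by simp⟩]
  simp

lemma glue_lipschitz {k : E → E} {L : NNReal} {R : ℝ}
    (hk : LipschitzOnWith L k (Metric.closedBall 0 R)) (hk0 : ∀ x, ‖x‖ = R → k x = 0) :
    LipschitzWith L (fun x => if x ∈ Metric.ball (0:E) R then k x else 0) := by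
  have key : ∀ x y, x ∈ Metric.ball (0:E) R → y ∉ Metric.ball (0:E) R → ‖k x‖ ≤ L * ‖x - y‖ := by
    intro x y hx hy
    rw [mem_ball_zero_iff] at hx hy
    have hc : ContinuousOn (fun t : ℝ => ‖x + t • (y - x)‖) (Set.Icc 0 1) := by fun_prop
    have := intermediate_value_Icc zero_le_one hc
    obtain ⟨t, ht, htR⟩ := this (show R ∈ _ from ⟨by simpa using hx.le, by simpa using not_lt.1 hy⟩)
    simp only at htR
    have h1 := hk.norm_sub_le (x := x) (by simpa using hx.le) (y := x + t • (y - x))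
      (by simpa using htR.le)
    rw [hk0 _ htR, sub_zero] at h1
    refine h1.trans ?_
    gcongr
    have : x - (x + t • (y - x)) = t • (x - y) := by rw [smul_sub, smul_sub]; abel
    rw [this, norm_smul, Real.norm_of_nonneg ht.1]
    exact mul_le_of_le_one_left (norm_nonneg _) ht.2
  refine LipschitzWith.of_dist_le_mul fun x y => ?_
  rw [dist_eq_norm, dist_eq_norm]
  by_cases hx : x ∈ Metric.ball (0:E) R <;> by_cases hy : y ∈ Metric.ball (0:E) R
  · rw [if_pos hx, if_pos hy]
    exact hk.norm_sub_le (Metric.ball_subset_closedBall hx) (Metric.ball_subset_closedBall hy)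
  · rw [if_pos hx, if_neg hy, sub_zero]
    exact key x y hx hy
  · rw [if_neg hx, if_pos hy, zero_sub, norm_neg, norm_sub_rev]
    exact key y x hy hx
  · rw [if_neg hx, if_neg hy, sub_zero, norm_zero]
    positivity

lemma exists_zero_smooth {v : E → E} (hv : ContDiff ℝ 1 v) (hc : HasCompactSupport v) :
    ∃ x, x + v x = 0 := by
  by_contra hcon
  push Not at hcon
  obtain ⟨R, hR0, hR⟩ : ∃ R : ℝ, 0 < R ∧ ∀ x, R ≤ ‖x‖ → v x = 0 := by
    obtain ⟨R, hR0, hR⟩ := hc.isCompact.isBounded.subset_ball_lt 0 0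
    refine ⟨R, hR0, fun x hx => ?_⟩
    by_contra hne
    have := hR (subset_tsupport _ hne)
    rw [mem_ball_zero_iff] at this
    linarith
  set u : E → E := fun x => x + v x with hu
  set f : E → E := fun x => (R * ‖u x‖⁻¹) • u x with hf
  have hun : ∀ x, ‖u x‖ ≠ 0 := fun x => norm_ne_zero_iff.2 (hcon x)
  have huC : ContDiff ℝ 1 u := contDiff_id.add hv
  have hfC : ContDiff ℝ 1 f := by
    refine ContDiff.smul (contDiff_const.mul (ContDiff.inv ?_ hun)) huC
    exact huC.norm ℝ hcon
  have hfn : ∀ x, ‖f x‖ = R := by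
    intro x
    simp only [hf]
    rw [norm_smul, norm_mul, norm_inv, norm_norm, mul_assoc, inv_mul_cancel₀ (hun x),
      Real.norm_of_nonneg hR0.le, mul_one]
  have hfR : ∀ x, ‖x‖ = R → f x = x := by
    intro x hx
    have : u x = x := by simp [hu, hR x hx.ge]
    simp [hf, this, hx, hR0.ne']
  have hkC : ContDiff ℝ 1 (fun x => f x - x) := hfC.sub contDiff_id
  obtain ⟨L, hL⟩ : ∃ L : NNReal, LipschitzOnWith L (fun x => f x - x) (Metric.closedBall 0 R) := by
    obtain ⟨C, hC⟩ := (isCompact_closedBall (0:E) R).exists_bound_of_continuousOn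
      (hkC.continuous_fderiv one_ne_zero).continuousOn
    refine ⟨C.toNNReal, (convex_closedBall 0 R).lipschitzOnWith_of_nnnorm_fderiv_le
      (fun x _ => hkC.differentiable one_ne_zero x) fun x hx => ?_⟩
    rw [← NNReal.coe_le_coe, coe_nnnorm]
    exact (hC x hx).trans (Real.le_coe_toNNReal C)
  have hglue := glue_lipschitz hL (fun x hx => by simp [hfR x hx])
  have heq : ∀ x ∈ Metric.ball (0:E) R, (fun x => if x ∈ Metric.ball (0:E) R then f x - x else 0)
      =ᶠ[nhds x] (fun x => f x - x) := fun x hx => by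
    filter_upwards [Metric.isOpen_ball.mem_nhds hx] with y hy
    rw [if_pos hy]
  have hintg := integral_det hglue (R := R) (fun x hx => by rw [if_neg hx])
    (fun x hx => (((hkC.differentiable one_ne_zero x).congr_of_eventuallyEq
      (heq x hx))).differentiableWithinAt)
  have hzero : ∀ x ∈ Metric.ball (0:E) R, (1 + fderiv ℝ
      (fun x => if x ∈ Metric.ball (0:E) R then f x - x else 0) x : E →L[ℝ] E).det = 0 := by
    intro x hx
    rw [(heq x hx).fderiv_eq]
    have hfd := (hfC.differentiable one_ne_zero x)
    rw [show fderiv ℝ (fun x => f x - x) x = fderiv ℝ f x - 1 from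
      (hfd.hasFDerivAt.sub (hasFDerivAt_id x)).fderiv, add_sub_cancel]
    by_contra hdet
    have hsurj : Function.Surjective (fderiv ℝ f x) := by
      have := LinearEquiv.ofIsUnitDet (f := (fderiv ℝ f x : E →ₗ[ℝ] E)) (v := Module.finBasis ℝ E)
        (v' := Module.finBasis ℝ E)
        (by rw [LinearMap.det_toMatrix]; exact isUnit_iff_ne_zero.2 hdet)
      intro y
      obtain ⟨z, hz⟩ := (LinearEquiv.ofIsUnitDet (f := (fderiv ℝ f x : E →ₗ[ℝ] E))
        (v := Module.finBasis ℝ E) (v' := Module.finBasis ℝ E)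
        (by rw [LinearMap.det_toMatrix]; exact isUnit_iff_ne_zero.2 hdet)).surjective y
      exact ⟨z, hz⟩
    obtain ⟨w, hw⟩ := hsurj (f x)
    have h1 := hfd.hasFDerivAt.inner ℝ hfd.hasFDerivAt
    have h2 : HasFDerivAt (fun x => inner ℝ (f x) (f x)) (0 : E →L[ℝ] ℝ) x := by
      have : (fun x => inner ℝ (f x) (f x)) = fun _ => R ^ 2 := by
        funext y
        rw [real_inner_self_eq_norm_sq, hfn]
      rw [this]
      exact hasFDerivAt_const _ _
    have h3 := congrArg (fun T : E →L[ℝ] ℝ => T w) (h1.unique h2)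
    simp [hw, hfn] at h3
    exact hR0.ne' h3
  rw [setIntegral_congr_fun measurableSet_ball hzero] at hintg
  simp only [integral_zero] at hintg
  have : 0 < volume.real (Metric.ball (0:E) R) :=
    ENNReal.toReal_pos (Metric.measure_ball_pos volume 0 hR0).ne' measure_ball_lt_top.ne
  exact this.ne hintg

lemma exists_zero_cont {w : E → E} (hw : Continuous w) (hc : HasCompactSupport w) :
    ∃ x, x + w x = 0 := by
  by_contra hcon
  push Not at hcon
  obtain ⟨g, hg, hgd, hgs⟩ := hw.exists_contDiff_approx 1 (ε := fun x => ‖x + w x‖)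
    (by fun_prop) (fun x => norm_pos_iff.2 (hcon x))
  obtain ⟨x, hx⟩ := exists_zero_smooth hg (hc.mono hgs)
  have := hgd x
  rw [dist_eq_norm, eq_neg_of_add_eq_zero_right hx, ← norm_neg, neg_sub, sub_neg_eq_add,
    add_comm] at this
  exact lt_irrefl _ this

/-- A continuous map at distance at most one from the identity on the unit ball has a zero. -/
lemma exists_zero_near_id {g : E → E} (hg : ContinuousOn g (Metric.closedBall 0 1))
    (h1 : ∀ x ∈ Metric.closedBall (0:E) 1, ‖g x - x‖ ≤ 1) :
    ∃ x ∈ Metric.closedBall (0:E) 1, g x = 0 := by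
  let P : E → E := fun x => (max 1 ‖x‖)⁻¹ • x
  have hm : ∀ x : E, 0 < max 1 ‖x‖ := fun x => lt_max_of_lt_left one_pos
  have hP : Continuous P :=
    Continuous.smul (Continuous.inv₀ (by fun_prop) fun x => (hm x).ne') continuous_id
  have hPm : ∀ x, P x ∈ Metric.closedBall (0:E) 1 := by
    intro x
    rw [mem_closedBall_zero_iff, norm_smul, norm_inv, Real.norm_of_nonneg (hm x).le,
      inv_mul_le_one₀ (hm x)]
    exact le_max_right _ _
  have hP1 : ∀ x ∈ Metric.closedBall (0:E) 1, P x = x := by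
    intro x hx
    rw [mem_closedBall_zero_iff] at hx
    simp [P, max_eq_left hx]
  let c : E → ℝ := fun x => max 0 (min 1 (2 - ‖x‖))
  have hc0 : ∀ x, 0 ≤ c x := fun x => le_max_left _ _
  have hc1 : ∀ x, c x ≤ 1 := fun x => max_le zero_le_one (min_le_left _ _)
  have hcB : ∀ x ∈ Metric.closedBall (0:E) 1, c x = 1 := by
    intro x hx
    rw [mem_closedBall_zero_iff] at hx
    simp only [c]
    rw [min_eq_left (by linarith), max_eq_right zero_le_one]
  obtain ⟨x, hx⟩ := exists_zero_cont (w := fun x => c x • (g (P x) - P x))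
    (Continuous.smul (by fun_prop) ((hg.comp_continuous hP hPm).sub hP)) (by
      refine HasCompactSupport.intro (isCompact_closedBall 0 2) fun x hx => ?_
      rw [mem_closedBall_zero_iff, not_le] at hx
      have : c x = 0 := max_eq_left ((min_le_right _ _).trans (by linarith))
      rw [this, zero_smul])
  have hxB : x ∈ Metric.closedBall (0:E) 1 := by
    rw [mem_closedBall_zero_iff, eq_neg_of_add_eq_zero_left hx, norm_neg, norm_smul,
      Real.norm_of_nonneg (hc0 x)]
    exact mul_le_one₀ (hc1 x) (norm_nonneg _) (h1 _ (hPm x))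
  refine ⟨x, hxB, ?_⟩
  simpa [hP1 x hxB, hcB x hxB] using hx

lemma iod_ball {f : E → E} (hf : ContinuousOn f (Metric.closedBall 0 1))
    (hinj : Set.InjOn f (Metric.closedBall 0 1)) :
    f '' (Metric.closedBall 0 1) ∈ nhds (f 0) := by
  by_contra hcon
  set B : Set E := Metric.closedBall 0 1 with hB
  have h0B : (0:E) ∈ B := by simp [hB]
  have hBc : IsCompact B := isCompact_closedBall 0 1
  have hCc : IsCompact (f '' B) := hBc.image_of_continuousOn hf
  obtain ⟨G, hG⟩ : ∃ G : E → E, Continuous G ∧ ∀ x ∈ B, G (f x) = x := by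
    have : CompactSpace B := isCompact_iff_compactSpace.1 hBc
    have he : Topology.IsClosedEmbedding (fun x : B => f x) :=
      Continuous.isClosedEmbedding (continuousOn_iff_continuous_domRestrict.1 hf)
        (fun x y hxy => Subtype.ext (hinj x.2 y.2 hxy))
    obtain ⟨G, hG⟩ := ContinuousMap.exists_extension he
      (⟨Subtype.val, continuous_subtype_val⟩ : C(B, E))
    exact ⟨G, G.continuous, fun x hx => DFunLike.congr_fun hG ⟨x, hx⟩⟩
  obtain ⟨hGc, hGf⟩ := hG
  have hGf0 : G (f 0) = 0 := hGf 0 h0B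
  obtain ⟨ρ, hρ, hGρ⟩ := Metric.continuous_iff.1 hGc (f 0) (1/10) (by norm_num)
  set ε := ρ / 2 with hε
  have hε0 : 0 < ε := by positivity
  obtain ⟨c, hcball, hcC⟩ : ∃ c, dist c (f 0) < ε ∧ c ∉ f '' B := by
    by_contra h
    push Not at h
    exact hcon (Filter.mem_of_superset (Metric.ball_mem_nhds _ hε0) fun y hy => h y hy)
  have hGsmall : ∀ y, ‖y - c‖ ≤ ε → ‖G y‖ < 1/10 := by
    intro y hy
    have := hGρ y (by
      have h1 := dist_triangle y c (f 0)
      rw [dist_eq_norm y c] at h1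
      linarith)
    rwa [hGf0, dist_zero_right] at this
  have hSc : IsCompact (f '' B ∩ {y | ε ≤ ‖y - c‖}) :=
    hCc.inter_right (isClosed_le continuous_const (by fun_prop))
  obtain ⟨δ₀, hδ₀, hGδ⟩ : ∃ δ₀ : ℝ, 0 < δ₀ ∧ ∀ y ∈ f '' B ∩ {y | ε ≤ ‖y - c‖}, δ₀ ≤ ‖G y‖ := by
    refine hSc.exists_forall_le' (hGc.norm.continuousOn) ?_
    rintro _ ⟨⟨x, hx, rfl⟩, hy⟩
    rw [norm_pos_iff, hGf x hx]
    rintro rfl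
    rw [dist_comm, dist_eq_norm] at hcball
    simp only [Set.mem_ofPred_eq] at hy
    linarith
  set δ := min δ₀ (1/10) with hδ
  have hδ0 : 0 < δ := lt_min hδ₀ (by norm_num)
  have hδ1 : δ ≤ 1/10 := min_le_right _ _
  obtain ⟨P₀, hP₀, hPd, -⟩ := hGc.exists_contDiff_approx 1 (ε := fun _ => δ / 4)
    continuous_const (fun _ => by positivity)
  obtain ⟨q, hq, hqn⟩ : ∃ q : E, ‖q‖ < δ / 4 ∧ q ∉ P₀ '' (Metric.sphere c ε) := by
    by_contra h
    push Not at h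
    have hz : volume (P₀ '' (Metric.sphere c ε)) = 0 :=
      addHaar_image_eq_zero_of_differentiableOn_of_addHaar_eq_zero volume
        (hP₀.differentiable (by norm_num)).differentiableOn
        (Measure.addHaar_sphere_of_ne_zero volume c hε0.ne')
    have hpos := Metric.measure_ball_pos volume (0:E) (show 0 < δ / 4 by positivity)
    have := measure_mono (μ := volume) (show Metric.ball (0:E) (δ/4) ⊆ P₀ '' (Metric.sphere c ε) from
      fun y hy => h y (by simpa using hy))
    rw [hz] at this
    exact absurd this (not_le.2 hpos)
  have hPG : ∀ y, ‖(P₀ y - q) - G y‖ < δ / 2 := by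
    intro y
    have h1 := hPd y
    rw [dist_eq_norm] at h1
    have h2 : (P₀ y - q) - G y = (P₀ y - G y) - q := by abel
    rw [h2]
    have := norm_sub_le (P₀ y - G y) q
    linarith
  let Φ : E → E := fun y => c + (max (ε / ‖y - c‖) 1) • (y - c)
  have hΦ1 : ∀ y, ε ≤ ‖y - c‖ → Φ y = y := by
    intro y hy
    have : ε / ‖y - c‖ ≤ 1 := div_le_one_of_le₀ hy (norm_nonneg _)
    simp [Φ, max_eq_right this]
  have hΦ2 : ∀ y ∈ f '' B, ‖y - c‖ < ε → ‖Φ y - c‖ = ε := by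
    intro y hy hlt
    have hpos : 0 < ‖y - c‖ := norm_pos_iff.2 (sub_ne_zero.2 fun h => hcC (h ▸ hy))
    have : 1 ≤ ε / ‖y - c‖ := (one_le_div hpos).2 hlt.le
    simp only [Φ, max_eq_left this, add_sub_cancel_left]
    rw [norm_smul, norm_div, norm_norm, Real.norm_of_nonneg hε0.le, div_mul_cancel₀ _ hpos.ne']
  have hΦc : ContinuousOn Φ (f '' B) := by
    refine continuousOn_const.add (ContinuousOn.smul (ContinuousOn.sup ?_ continuousOn_const)
      (by fun_prop))
    refine ContinuousOn.div continuousOn_const (by fun_prop) fun y hy => ?_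
    exact norm_ne_zero_iff.2 (sub_ne_zero.2 fun h => hcC (h ▸ hy))
  obtain ⟨x, hxB, hx⟩ := exists_zero_near_id (g := fun x => P₀ (Φ (f x)) - q)
    ((hP₀.continuous.comp_continuousOn (hΦc.comp hf (Set.mapsTo_image f B))).sub continuousOn_const)
    (by
      intro x hx
      have hy : f x ∈ f '' B := Set.mem_image_of_mem f hx
      rcases le_or_gt ε ‖f x - c‖ with h | h
      · simp only [hΦ1 _ h]
        have := hPG (f x)
        rw [hGf x hx] at this
        linarith
      · have h1 := hPG (Φ (f x))
        have h2 := hGsmall _ (hΦ2 _ hy h).le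
        have h3 := hGsmall _ h.le
        rw [hGf x hx] at h3
        have h4 := norm_sub_le (P₀ (Φ (f x)) - q) x
        have h5 := norm_add_le (P₀ (Φ (f x)) - q - G (Φ (f x))) (G (Φ (f x)))
        rw [sub_add_cancel] at h5
        linarith)
  have hy : f x ∈ f '' B := Set.mem_image_of_mem f hxB
  rcases le_or_gt ε ‖f x - c‖ with h | h
  · have h1 := hPG (f x)
    rw [hΦ1 _ h] at hx
    rw [hx, zero_sub, norm_neg] at h1
    have h2 := hGδ _ ⟨hy, h⟩
    have : δ ≤ δ₀ := min_le_left _ _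
    linarith
  · exact hqn ⟨Φ (f x), by simpa [dist_eq_norm] using hΦ2 _ hy h, sub_eq_zero.1 hx⟩

end Brouwer

section Domain

lemma iod_euclidean {d : ℕ} {f : Euc d → Euc d} {U : Set (Euc d)} (hU : IsOpen U)
    (hf : ContinuousOn f U) (hinj : Set.InjOn f U) : IsOpen (f '' U) := by
  rw [isOpen_iff_mem_nhds]
  rintro _ ⟨x, hx, rfl⟩
  obtain ⟨r, hr, hrU⟩ := Metric.nhds_basis_closedBall.mem_iff.1 (hU.mem_nhds hx)
  have hmaps : Set.MapsTo (fun v : Euc d => x + r • v) (Metric.closedBall 0 1) U := by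
    intro v hv
    apply hrU
    rw [mem_closedBall_zero_iff] at hv
    simp only [Metric.mem_closedBall, dist_eq_norm, add_sub_cancel_left, norm_smul,
      Real.norm_of_nonneg hr.le]
    exact mul_le_of_le_one_right hr.le hv
  have := iod_ball (f := fun v : Euc d => f (x + r • v))
    (hf.comp (by fun_prop) hmaps) (fun a ha b hb hab => by
      have := hinj (hmaps ha) (hmaps hb) hab
      exact smul_right_injective _ hr.ne' (add_left_cancel this))
  simp only [smul_zero, add_zero] at this
  refine Filter.mem_of_superset this ?_
  rintro _ ⟨v, hv, rfl⟩
  exact ⟨_, hmaps hv, rfl⟩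

variable {E F : Type*} [NormedAddCommGroup E] [NormedSpace ℝ E] [FiniteDimensional ℝ E]
  [NormedAddCommGroup F] [NormedSpace ℝ F] [FiniteDimensional ℝ F]

/-- Invariance of domain. -/
theorem invariance_of_domain (hdim : Module.finrank ℝ E = Module.finrank ℝ F) {f : E → F}
    {U : Set E} (hU : IsOpen U) (hf : ContinuousOn f U) (hinj : Set.InjOn f U) :
    IsOpen (f '' U) := by
  let e₁ : Euc (Module.finrank ℝ E) ≃L[ℝ] E := ContinuousLinearEquiv.ofFinrankEq (by simp)
  let e₂ : F ≃L[ℝ] Euc (Module.finrank ℝ E) := ContinuousLinearEquiv.ofFinrankEq (by simp [hdim])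
  have h := iod_euclidean (f := fun x => e₂ (f (e₁ x))) (U := e₁ ⁻¹' U)
    (hU.preimage e₁.continuous)
    (e₂.continuous.comp_continuousOn (hf.comp e₁.continuous.continuousOn fun _ h => h))
    (fun a ha b hb hab => e₁.injective (hinj ha hb (e₂.injective hab)))
  have h2 : f '' U = e₂ ⁻¹' ((fun x => e₂ (f (e₁ x))) '' (e₁ ⁻¹' U)) := by
    ext y
    constructor
    · rintro ⟨x, hx, rfl⟩
      exact ⟨e₁.symm x, by simpa using hx, by simp⟩
    · rintro ⟨x, hx, hxy⟩
      exact ⟨e₁ x, hx, e₂.injective hxy⟩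
  rw [h2]
  exact h.preimage e₂.continuous

/-- No continuous injection from a nonempty open set to a smaller dimensional space. -/
theorem no_injection_smaller (hdim : Module.finrank ℝ F < Module.finrank ℝ E) {f : E → F}
    {U : Set E} (hU : IsOpen U) (hne : U.Nonempty) (hf : ContinuousOn f U)
    (hinj : Set.InjOn f U) : False := by
  obtain ⟨k, hk⟩ := Nat.exists_eq_add_of_lt hdim
  let W := F × Euc (k + 1)
  have hW : Module.finrank ℝ E = Module.finrank ℝ W := by
    simp [W, hk, add_assoc]
  have hop := invariance_of_domain hW hU (f := fun x => ((f x, 0) : W))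
    (hf.prodMk continuousOn_const) (fun a ha b hb hab => hinj ha hb (Prod.ext_iff.1 hab).1)
  have h2 := hop.preimage (f := fun v : Euc (k+1) => ((f hne.some, v) : W)) (by fun_prop)
  have h3 : (fun v : Euc (k+1) => ((f hne.some, v) : W)) ⁻¹' ((fun x => ((f x, 0) : W)) '' U)
      = {0} := by
    ext v
    constructor
    · rintro ⟨x, hx, hxy⟩
      exact (Prod.ext_iff.1 hxy).2.symm
    · rintro rfl
      exact ⟨_, hne.some_mem, rfl⟩
  rw [h3] at h2
  exact not_isOpen_singleton (0 : Euc (k+1)) h2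

end Domain

section Cone

/-- A compact chart around `z` in `S` modelled on an `n`-dimensional vector space. -/
def HasChart (n : ℕ) (S : Set (Euc N)) (z : Euc N) : Prop :=
  ∃ (F : Type) (_ : NormedAddCommGroup F) (_ : NormedSpace ℝ F) (_ : FiniteDimensional ℝ F)
    (D : Set F) (ψ : F → Euc N), Module.finrank ℝ F = n ∧ IsCompact D ∧ D ∈ nhds 0 ∧
    Continuous ψ ∧ Set.InjOn ψ D ∧ ψ 0 = z ∧ ψ '' D ⊆ S ∧ ψ '' D ∈ nhdsWithin z S

lemma unpack_homeo {n r : ℕ} {U : Set (Euc N)}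
    (h : U ≃ₜ (Tcone r) × EuclideanSpace ℝ (Fin (n - 1))) :
    ∃ (k : Euc N → (ℝ × ℝ) × Euc (n - 1)) (l : (ℝ × ℝ) × Euc (n - 1) → Euc N),
      ContinuousOn k U ∧ ContinuousOn l (Tcone r ×ˢ Set.univ) ∧
      Set.MapsTo k U (Tcone r ×ˢ Set.univ) ∧ Set.MapsTo l (Tcone r ×ˢ Set.univ) U ∧
      (∀ x ∈ U, l (k x) = x) ∧ (∀ y ∈ Tcone r ×ˢ Set.univ, k (l y) = y) ∧
      ∀ x (hx : x ∈ U), (k x).1 = (h ⟨x, hx⟩).1 := by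
  have hk : ∀ x (hx : x ∈ U), (if hx : x ∈ U then
      (((h ⟨x, hx⟩).1 : ℝ × ℝ), (h ⟨x, hx⟩).2) else 0) =
        (((h ⟨x, hx⟩).1 : ℝ × ℝ), (h ⟨x, hx⟩).2) := fun x hx => dif_pos hx
  have hl : ∀ y : (ℝ × ℝ) × Euc (n - 1), ∀ (hy : y.1 ∈ Tcone r),
      (if hy : y.1 ∈ Tcone r then (h.symm (⟨y.1, hy⟩, y.2) : Euc N) else 0) =
      h.symm (⟨y.1, hy⟩, y.2) := fun y hy => dif_pos hy
  refine ⟨fun x => if hx : x ∈ U then (((h ⟨x, hx⟩).1 : ℝ × ℝ), (h ⟨x, hx⟩).2) else 0,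
    fun y => if hy : y.1 ∈ Tcone r then (h.symm (⟨y.1, hy⟩, y.2) : Euc N) else 0, ?_, ?_, ?_, ?_,
    ?_, ?_, ?_⟩
  · rw [continuousOn_iff_continuous_domRestrict]
    have : Continuous (fun x : U => (((h x).1 : ℝ × ℝ), (h x).2)) := by fun_prop
    convert this using 1
    funext x
    exact hk x.1 x.2
  · rw [continuousOn_iff_continuous_domRestrict]
    have : Continuous (fun y : (Tcone r ×ˢ Set.univ : Set ((ℝ × ℝ) × Euc (n - 1))) =>
        (h.symm (⟨y.1.1, y.2.1⟩, y.1.2) : Euc N)) := by fun_prop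
    convert this using 1
    funext y
    exact hl y.1 y.2.1
  · intro x hx
    simp only [hk x hx]
    exact ⟨(h ⟨x, hx⟩).1.2, Set.mem_univ _⟩
  · intro y hy
    simp only [hl y hy.1]
    exact Subtype.coe_prop _
  · intro x hx
    simp only [hk x hx]
    rw [dif_pos (h ⟨x, hx⟩).1.2]
    simp
  · intro y hy
    simp only [hl y hy.1]
    rw [dif_pos (Subtype.coe_prop _)]
    simp
  · intro x hx
    simp only [hk x hx]

lemma zero_mem_Tcone (r : ℕ) : (0 : ℝ × ℝ) ∈ Tcone r := Or.inl rfl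

lemma ray_mem_Tcone {r k : ℕ} (hk : k < r) {t : ℝ} (h0 : 0 ≤ t) (h1 : t < 1) :
    ((t, t * k) : ℝ × ℝ) ∈ Tcone r := by
  refine Or.inr ?_
  simp only [Set.mem_iUnion]
  exact ⟨k, Finset.mem_range.2 hk, t, h0, h1, by simp⟩

lemma Tcone_le_one {r : ℕ} (hr : r ≤ 1) {p : ℝ × ℝ} (hp : p ∈ Tcone r) : 0 ≤ p.1 ∧ p.2 = 0 := by
  rcases hp with hp | hp
  · rw [Set.mem_singleton_iff.1 hp]
    simp
  · simp only [Set.mem_iUnion] at hp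
    obtain ⟨k, hk, t, h0, h1, rfl⟩ := hp
    have : k = 0 := by
      have := Finset.mem_range.1 hk
      omega
    subst this
    simpa using h0

lemma no_cone_chart {n r : ℕ} (hn : 2 ≤ n) (hr : r ≠ 2) {S U : Set (Euc N)} {z : Euc N}
    (hchart : HasChart n S z) (hU : U ∈ nhdsWithin z S) (hUS : U ⊆ S) (hzU : z ∈ U)
    {k : Euc N → (ℝ × ℝ) × Euc (n - 1)} {l : (ℝ × ℝ) × Euc (n - 1) → Euc N}
    (hk : ContinuousOn k U) (hl : ContinuousOn l (Tcone r ×ˢ Set.univ))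
    (hkm : Set.MapsTo k U (Tcone r ×ˢ Set.univ)) (hlm : Set.MapsTo l (Tcone r ×ˢ Set.univ) U)
    (hlk : ∀ x ∈ U, l (k x) = x) (hkl : ∀ y ∈ Tcone r ×ˢ Set.univ, k (l y) = y)
    (hz : (k z).1 = 0) : False := by
  obtain ⟨F, _, _, _, D, ψ, hF, hD, hD0, hψ, hψi, hψ0, hψS, hψn⟩ := hchart
  have hfr : Module.finrank ℝ F = Module.finrank ℝ (ℝ × Euc (n - 1)) := by
    simp [hF]
    omega
  obtain ⟨V, hV, hzV, hVU⟩ := mem_nhdsWithin.1 hU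
  rcases Nat.lt_or_ge r 2 with hr2 | hr2
  · -- `r ≤ 1`
    set O : Set F := interior D ∩ ψ ⁻¹' V with hO
    have hOo : IsOpen O := isOpen_interior.inter (hV.preimage hψ)
    have hO0 : (0:F) ∈ O := ⟨mem_interior_iff_mem_nhds.2 hD0, by simpa [hψ0] using hzV⟩
    have hOU : Set.MapsTo ψ O U := fun v hv =>
      hVU ⟨hv.2, hψS ⟨v, interior_subset hv.1, rfl⟩⟩
    have hop := invariance_of_domain hfr hOo (f := fun v => ((k (ψ v)).1.1, (k (ψ v)).2))
      (by
        have := hk.comp hψ.continuousOn hOU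
        exact (continuous_fst.comp_continuousOn (continuous_fst.comp_continuousOn this)).prodMk
          (continuous_snd.comp_continuousOn this))
      (by
        intro a ha b hb hab
        simp only [Prod.mk.injEq] at hab
        have ha2 := (Tcone_le_one (by omega) (hkm (hOU ha)).1).2
        have hb2 := (Tcone_le_one (by omega) (hkm (hOU hb)).1).2
        have : k (ψ a) = k (ψ b) :=
          Prod.ext (Prod.ext hab.1 (ha2.trans hb2.symm)) hab.2
        have h2 : ψ a = ψ b := by rw [← hlk _ (hOU ha), this, hlk _ (hOU hb)]
        exact hψi (interior_subset ha.1) (interior_subset hb.1) h2)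
    have hpre := hop.preimage (f := fun t : ℝ => (t, (k z).2)) (by fun_prop)
    have hmem : (0:ℝ) ∈ (fun t : ℝ => (t, (k z).2)) ⁻¹'
        ((fun v => ((k (ψ v)).1.1, (k (ψ v)).2)) '' O) :=
      ⟨0, hO0, by simp [hψ0, hz]⟩
    obtain ⟨ε, hε, hεs⟩ := Metric.isOpen_iff.1 hpre 0 hmem
    obtain ⟨v, hv, hve⟩ := hεs (show -(ε/2) ∈ Metric.ball (0:ℝ) ε by
      rw [mem_ball_zero_iff, norm_neg, Real.norm_of_nonneg (by positivity)]
      linarith)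
    have h1 := (Prod.ext_iff.1 hve).1
    simp only at h1
    have := (Tcone_le_one (by omega) (hkm (hOU hv)).1).1
    linarith
  · have hr3 : 3 ≤ r := by omega
    obtain ⟨V', hV', hzV', hVD⟩ := mem_nhdsWithin.1 hψn
    obtain ⟨θ, hθ, hθψ⟩ : ∃ θ : Euc N → F, Continuous θ ∧ ∀ v ∈ D, θ (ψ v) = v := by
      have : CompactSpace D := isCompact_iff_compactSpace.1 hD
      have he : Topology.IsClosedEmbedding (fun x : D => ψ x) :=
        Continuous.isClosedEmbedding (hψ.comp continuous_subtype_val)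
          (fun x y hxy => Subtype.ext (hψi x.2 y.2 hxy))
      obtain ⟨G, hG⟩ := ContinuousMap.exists_extension he
        (⟨Subtype.val, continuous_subtype_val⟩ : C(D, F))
      exact ⟨G, G.continuous, fun x hx => DFunLike.congr_fun hG ⟨x, hx⟩⟩
    have hθi : Set.InjOn θ (ψ '' D) := by
      rintro _ ⟨a, ha, rfl⟩ _ ⟨b, hb, rfl⟩ hab
      rw [hθψ a ha, hθψ b hb] at hab
      rw [hab]
    have hli : Set.InjOn l (Tcone r ×ˢ Set.univ) := fun a ha b hb hab => by
      rw [← hkl a ha, hab, hkl b hb]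
    set j : ℝ × Euc (n - 1) → (ℝ × ℝ) × Euc (n - 1) := fun q => ((|q.1|, max (-q.1) 0), q.2) with hj
    have hjc : Continuous j := by fun_prop
    have hjm : ∀ q : ℝ × Euc (n - 1), |q.1| < 1 → j q ∈ Tcone r ×ˢ Set.univ := by
      intro q hq
      refine ⟨?_, Set.mem_univ _⟩
      simp only [hj]
      rcases le_total 0 q.1 with h | h
      · have := ray_mem_Tcone (r := r) (k := 0) (by omega) (abs_nonneg q.1) hq
        rwa [max_eq_right (by linarith), ← mul_zero |q.1|, ← Nat.cast_zero]
      · have := ray_mem_Tcone (r := r) (k := 1) (by omega) (abs_nonneg q.1) hq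
        rw [Nat.cast_one, mul_one] at this
        rwa [max_eq_left (by linarith), ← abs_of_nonpos h]
    have hji : Function.Injective j := by
      rintro ⟨a, y⟩ ⟨b, y'⟩ hab
      simp only [hj, Prod.mk.injEq] at hab
      obtain ⟨⟨h1, h2⟩, h3⟩ := hab
      refine Prod.ext ?_ h3
      rcases le_total 0 a with ha | ha <;> rcases le_total 0 b with hb | hb
      · rwa [abs_of_nonneg ha, abs_of_nonneg hb] at h1
      · rw [max_eq_right (by linarith), max_eq_left (by linarith)] at h2
        rw [abs_of_nonneg ha, abs_of_nonpos hb] at h1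
        simp only
        linarith
      · rw [max_eq_left (by linarith), max_eq_right (by linarith)] at h2
        rw [abs_of_nonpos ha, abs_of_nonneg hb] at h1
        simp only
        linarith
      · rw [max_eq_left (by linarith), max_eq_left (by linarith)] at h2
        simp only
        linarith
    have hIo : IsOpen {q : ℝ × Euc (n - 1) | |q.1| < 1} :=
      isOpen_lt (by fun_prop) continuous_const
    have hljc : ContinuousOn (fun q => l (j q)) {q : ℝ × Euc (n - 1) | |q.1| < 1} :=
      hl.comp hjc.continuousOn hjm
    set Q : Set (ℝ × Euc (n - 1)) := {q | |q.1| < 1} ∩ (fun q => l (j q)) ⁻¹' V' with hQ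
    have hQo : IsOpen Q := hljc.isOpen_inter_preimage hIo hV'
    have hQD : ∀ q ∈ Q, l (j q) ∈ ψ '' D := fun q hq => hVD ⟨hq.2, hUS (hlm (hjm q hq.1))⟩
    have hop := invariance_of_domain hfr.symm hQo (f := fun q => θ (l (j q)))
      (hθ.comp_continuousOn (hljc.mono Set.inter_subset_left))
      (fun a ha b hb hab => hji (hli (hjm a ha.1) (hjm b hb.1) (hθi (hQD a ha) (hQD b hb) hab)))
    have hkz : k z = (0, (k z).2) := Prod.ext hz rfl
    have hlz : l (0, (k z).2) = z := by rw [← hkz, hlk z hzU]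
    have hj0 : j (0, (k z).2) = (0, (k z).2) := by
      simp [hj]
    have hq0 : (0, (k z).2) ∈ Q := by
      refine ⟨by simp, ?_⟩
      simp only [Set.mem_preimage, hj0, hlz]
      exact hzV'
    have hmem : θ z ∈ (fun q => θ (l (j q))) '' Q := ⟨_, hq0, by simp only [hj0, hlz]⟩
    -- the third ray
    set m : ℝ → (ℝ × ℝ) × Euc (n - 1) := fun t => ((t, t * (2:ℕ)), (k z).2) with hm
    have hmm : Set.MapsTo m (Set.Ico 0 1) (Tcone r ×ˢ Set.univ) := fun t ht =>
      ⟨ray_mem_Tcone (by omega) ht.1 ht.2, Set.mem_univ _⟩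
    have hm0 : m 0 = (0, (k z).2) := by simp [hm]
    have hlmc : ContinuousOn (fun t => l (m t)) (Set.Ico 0 1) :=
      hl.comp (by fun_prop) hmm
    have hcw : ContinuousWithinAt (fun t => l (m t)) (Set.Ico 0 1) 0 := hlmc 0 (by simp)
    have hz0 : l (m 0) = z := by rw [hm0, hlz]
    have e1 : ∀ᶠ t in nhdsWithin (0:ℝ) (Set.Ico 0 1), l (m t) ∈ V' :=
      hcw.eventually_mem (by simpa only [hz0] using hV'.mem_nhds hzV')
    have e2 : ∀ᶠ t in nhdsWithin (0:ℝ) (Set.Ico 0 1), θ (l (m t)) ∈ (fun q => θ (l (j q))) '' Q :=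
      (hθ.continuousAt.comp_continuousWithinAt hcw).eventually_mem
        (by simpa only [hz0, Function.comp] using hop.mem_nhds hmem)
    have hle : nhdsWithin (0:ℝ) (Set.Ioo 0 1) ≤ nhdsWithin 0 (Set.Ico 0 1) :=
      nhdsWithin_mono _ Set.Ioo_subset_Ico_self
    have : (nhdsWithin (0:ℝ) (Set.Ioo 0 1)).NeBot := by
      rw [nhdsWithin_Ioo_eq_nhdsGT one_pos]
      infer_instance
    obtain ⟨t, ⟨ht1, q, hq, hqt⟩, ht⟩ := (((e1.and e2).filter_mono hle).and
      (self_mem_nhdsWithin : Set.Ioo (0:ℝ) 1 ∈ nhdsWithin (0:ℝ) (Set.Ioo 0 1))).exists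
    have htI : t ∈ Set.Ico (0:ℝ) 1 := ⟨ht.1.le, ht.2⟩
    have h1 := hθi (hQD q hq) (hVD ⟨ht1, hUS (hlm (hmm htI))⟩) hqt
    have h2 := hli (hjm q hq.1) (hmm htI) h1
    simp only [hj, hm, Prod.mk.injEq] at h2
    obtain ⟨⟨h3, h4⟩, -⟩ := h2
    have h5 : max (-q.1) 0 ≤ |q.1| := max_le (neg_le_abs _) (abs_nonneg _)
    rw [h3, h4] at h5
    have := ht.1
    push_cast at h5
    linarith

/-- The apex set of a cone neighbourhood is not contained in the `(n-2)`-skeleton. -/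
lemma exists_generic {n : ℕ} (hn : 2 ≤ n) (𝒮 : Set (Finset (Euc N))) (hfin : 𝒮.Finite)
    (hcard : ∀ s ∈ 𝒮, s.Nonempty ∧ s.card ≤ n - 1) {φ : Euc (n - 1) → Euc N} (hφ : Continuous φ)
    (hinj : Function.Injective φ) {V : Set (Euc N)} (hV : IsOpen V) {y₀ : Euc (n - 1)}
    (hy₀ : φ y₀ ∈ V) : ∃ y, φ y ∈ V ∧ ∀ s ∈ 𝒮, φ y ∉ convexHull ℝ (s : Set (Euc N)) := by
  have hcl : ∀ s ∈ 𝒮, IsClosed (φ ⁻¹' convexHull ℝ (s : Set (Euc N))) := fun s _ =>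
    ((s.finite_toSet.isClosed_convexHull ℝ)).preimage hφ
  have hintg : ∀ s ∈ 𝒮, interior (φ ⁻¹' convexHull ℝ (s : Set (Euc N))) = ∅ := by
    intro s hs
    by_contra hne
    obtain ⟨y₁, hy₁⟩ := Set.nonempty_iff_ne_empty.2 hne
    set W := vectorSpan ℝ (s : Set (Euc N)) with hW
    have hmem : ∀ y ∈ interior (φ ⁻¹' convexHull ℝ (s : Set (Euc N))), φ y - φ y₁ ∈ W := by
      intro y hy
      rw [hW, ← direction_affineSpan]
      exact AffineSubspace.vsub_mem_direction (convexHull_subset_affineSpan _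
          (show φ y ∈ convexHull ℝ (s : Set (Euc N)) from interior_subset (s := φ ⁻¹' convexHull ℝ (s : Set (Euc N))) hy))
        (convexHull_subset_affineSpan _
          (show φ y₁ ∈ convexHull ℝ (s : Set (Euc N)) from interior_subset (s := φ ⁻¹' convexHull ℝ (s : Set (Euc N))) hy₁))
    have hdim : Module.finrank ℝ W < Module.finrank ℝ (Euc (n - 1)) := by
      obtain ⟨hs0, hs1⟩ := hcard s hs
      obtain ⟨c, hc⟩ := Nat.exists_eq_succ_of_ne_zero (Finset.card_pos.2 hs0).ne'
      have this : Module.finrank ℝ W ≤ c := by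
        have h := finrank_vectorSpan_image_finset_le ℝ (id : Euc N → Euc N) s hc
        rw [Finset.image_id] at h
        exact h
      simp only [finrank_euclideanSpace, Fintype.card_fin]
      omega
    refine no_injection_smaller hdim (f := fun y => W.orthogonalProjectionOnto (φ y - φ y₁))
      isOpen_interior ⟨y₁, hy₁⟩ (by fun_prop) ?_
    intro a ha b hb hab
    have ha' := Submodule.starProjection_eq_self_iff.2 (hmem a ha)
    have hb' := Submodule.starProjection_eq_self_iff.2 (hmem b hb)
    have : φ a - φ y₁ = φ b - φ y₁ := by
      rw [← ha', ← hb', Submodule.starProjection_apply, Submodule.starProjection_apply]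
      exact congrArg Subtype.val hab
    exact hinj (sub_left_injective this)
  have hdense : Dense (⋂ s ∈ 𝒮, (φ ⁻¹' convexHull ℝ (s : Set (Euc N)))ᶜ) :=
    dense_biInter_of_isOpen (fun s hs => (hcl s hs).isOpen_compl) hfin.countable
      (fun s hs => interior_eq_empty_iff_dense_compl.1 (hintg s hs))
  obtain ⟨y, hyV, hy⟩ := hdense.inter_open_nonempty _ (hV.preimage hφ) ⟨y₀, hy₀⟩
  refine ⟨y, hyV, fun s hs h => ?_⟩
  simp only [Set.mem_iInter] at hy
  exact hy s hs h

end Cone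

section Charts

lemma nhds_of_pos {s : Finset (Euc N)} (hs : s.Nonempty) {z : Euc N} {w : Euc N → ℝ}
    (hw : ∀ y ∈ s, 0 < w y) (hw1 : ∑ y ∈ s, w y = 1) (hwz : ∑ y ∈ s, w y • y = z) :
    {v : vectorSpan ℝ (s : Set (Euc N)) | z + (v : Euc N) ∈ convexHull ℝ (s : Set (Euc N))} ∈
      nhds (0 : vectorSpan ℝ (s : Set (Euc N))) := by
  obtain ⟨p, hp⟩ := hs
  have hmem : ∀ i : s, (i : Euc N) - p ∈ vectorSpan ℝ (s : Set (Euc N)) := fun i =>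
    vsub_mem_vectorSpan ℝ i.2 hp
  let G : (s → ℝ) →ₗ[ℝ] vectorSpan ℝ (s : Set (Euc N)) :=
    Fintype.linearCombination ℝ (fun i : s => (⟨(i : Euc N) - p, hmem i⟩ : vectorSpan ℝ (s : Set (Euc N))))
  have hG : ∀ c, (G c : Euc N) = ∑ i : s, c i • ((i : Euc N) - p) := by
    intro c
    simp [G, Fintype.linearCombination_apply]
  have hsurj : Function.Surjective G := by
    intro v
    have h1 := vectorSpan_range_eq_span_range_vsub_right ℝ (fun i : s => (i : Euc N)) ⟨p, hp⟩
    have h2 : Set.range (fun i : s => (i : Euc N)) = (s : Set (Euc N)) := Subtype.range_coe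
    have h3 := v.2
    rw [h2] at h1
    have h4 : (v : Euc N) ∈ Submodule.span ℝ (Set.range fun i : s => (i : Euc N) -ᵥ p) := h1 ▸ h3
    obtain ⟨c, hc⟩ := (Submodule.mem_span_range_iff_exists_fun ℝ).1 h4
    exact ⟨c, Subtype.ext (by rw [hG]; exact hc)⟩
  have hopen := G.isOpenMap_of_finiteDimensional hsurj
  let A : Set (s → ℝ) := {c | ∀ i : s, 0 < w i + c i - (if (i : Euc N) = p then ∑ j, c j else 0)}
  have hA : IsOpen A := by
    have : A = ⋂ i : s, {c : s → ℝ | 0 < w i + c i - (if (i : Euc N) = p then ∑ j, c j else 0)} := by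
      ext c; simp [A]
    rw [this]
    refine isOpen_iInter_of_finite fun i => isOpen_lt continuous_const ?_
    by_cases h : (i : Euc N) = p
    · simp only [h, if_true]; fun_prop
    · simp only [h, if_false]; fun_prop
  have hA0 : (0 : s → ℝ) ∈ A := by
    intro i
    simpa using hw i i.2
  refine Filter.mem_of_superset ((hopen A hA).mem_nhds ⟨0, hA0, map_zero G⟩) ?_
  rintro _ ⟨c, hc, rfl⟩
  have hc' : ∀ i : s, 0 < w i + c i - (if (i : Euc N) = p then ∑ j, c j else 0) := hc
  have hsum : ∑ i : s, (if (i : Euc N) = p then ∑ j, c j else 0) = ∑ j, c j := by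
    rw [Finset.sum_eq_single ⟨p, hp⟩]
    · simp
    · intro b _ hb
      exact if_neg fun h => hb (Subtype.ext h)
    · simp
  have hsum2 : ∑ i : s, (if (i : Euc N) = p then ∑ j, c j else 0) • (i : Euc N) = (∑ j, c j) • p := by
    rw [Finset.sum_eq_single ⟨p, hp⟩]
    · simp
    · intro b _ hb
      rw [if_neg fun h => hb (Subtype.ext h), zero_smul]
    · simp
  have key : z + (G c : Euc N) =
      ∑ i : s, (w i + c i - (if (i : Euc N) = p then ∑ j, c j else 0)) • (i : Euc N) := by
    simp only [sub_smul, add_smul, Finset.sum_sub_distrib, Finset.sum_add_distrib]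
    rw [hsum2, hG, Finset.sum_coe_sort s (fun i => w i • i), hwz, Finset.sum_smul]
    simp only [smul_sub, Finset.sum_sub_distrib]
    abel
  show z + (G c : Euc N) ∈ convexHull ℝ (s : Set (Euc N))
  rw [key]
  refine (convex_convexHull ℝ _).sum_mem (fun i _ => (hc' i).le) ?_
    (fun i _ => subset_convexHull ℝ _ i.2)
  rw [Finset.sum_sub_distrib, Finset.sum_add_distrib, hsum, Finset.sum_coe_sort s w, hw1]
  ring

lemma sub_mem_of_hull {s : Set (Euc N)} {x z : Euc N} (hx : x ∈ convexHull ℝ s)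
    (hz : z ∈ convexHull ℝ s) : x - z ∈ vectorSpan ℝ s := by
  rw [← direction_affineSpan]
  exact AffineSubspace.vsub_mem_direction (convexHull_subset_affineSpan _ hx)
    (convexHull_subset_affineSpan _ hz)

lemma chart_one {n : ℕ} {s : Finset (Euc N)} {z : Euc N} {S : Set (Euc N)}
    (hz : z ∈ convexHull ℝ (s : Set (Euc N)))
    (hnb : {v : vectorSpan ℝ (s : Set (Euc N)) | z + (v : Euc N) ∈ convexHull ℝ (s : Set (Euc N))} ∈
      nhds (0 : vectorSpan ℝ (s : Set (Euc N))))
    (hfr : Module.finrank ℝ (vectorSpan ℝ (s : Set (Euc N))) = n)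
    (hS : convexHull ℝ (s : Set (Euc N)) ⊆ S)
    (hS' : convexHull ℝ (s : Set (Euc N)) ∈ nhdsWithin z S) : HasChart n S z := by
  have himg : (fun v : vectorSpan ℝ (s : Set (Euc N)) => z + (v : Euc N)) ''
      {v | z + (v : Euc N) ∈ convexHull ℝ (s : Set (Euc N))} = convexHull ℝ (s : Set (Euc N)) := by
    ext x
    constructor
    · rintro ⟨v, hv, rfl⟩
      exact hv
    · intro hx
      refine ⟨⟨x - z, sub_mem_of_hull hx hz⟩, ?_, ?_⟩ <;> simp [hx]
  refine ⟨vectorSpan ℝ (s : Set (Euc N)), inferInstance, inferInstance, inferInstance,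
    {v | z + (v : Euc N) ∈ convexHull ℝ (s : Set (Euc N))}, fun v => z + (v : Euc N), hfr, ?_, hnb,
    by fun_prop, ?_, by simp, by rw [himg]; exact hS, by rw [himg]; exact hS'⟩
  · have hce : Topology.IsClosedEmbedding (fun v : vectorSpan ℝ (s : Set (Euc N)) => z + (v : Euc N)) :=
      (Homeomorph.addLeft z).isClosedEmbedding.comp
        (Submodule.closed_of_finiteDimensional _).isClosedEmbedding_subtypeVal
    exact hce.isCompact_preimage (s.finite_toSet.isCompact_convexHull ℝ)
  · intro a _ b _ hab
    exact Subtype.ext (add_left_cancel hab)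

/-- Half of the chart at a point of a codimension one simplex. -/
lemma half_chart {s : Finset (Euc N)} {z a : Euc N}
    (hz : z ∈ convexHull ℝ (s : Set (Euc N)))
    (ha : a ∉ affineSpan ℝ (s : Set (Euc N))) :
    ∀ t : ℝ, t • (a - z) ∈ vectorSpan ℝ (s : Set (Euc N)) → t = 0 := by
  intro t ht
  by_contra h
  have h1 : a - z ∈ vectorSpan ℝ (s : Set (Euc N)) := by
    have := Submodule.smul_mem _ t⁻¹ ht
    rwa [smul_smul, inv_mul_cancel₀ h, one_smul] at this
  rw [← direction_affineSpan] at h1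
  apply ha
  have := AffineSubspace.vadd_mem_of_mem_direction h1 (convexHull_subset_affineSpan _ hz)
  simpa using this

lemma half_compact {s : Finset (Euc N)} {z a : Euc N} (σ : Finset (Euc N))
    (hind : ∀ t : ℝ, t • (a - z) ∈ vectorSpan ℝ (s : Set (Euc N)) → t = 0) :
    Function.Injective (fun q : vectorSpan ℝ (s : Set (Euc N)) × ℝ =>
      z + (q.1 : Euc N) + q.2 • (a - z)) ∧
    IsCompact {q : vectorSpan ℝ (s : Set (Euc N)) × ℝ |
      z + (q.1 : Euc N) + q.2 • (a - z) ∈ convexHull ℝ (σ : Set (Euc N))} := by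
  let L : vectorSpan ℝ (s : Set (Euc N)) × ℝ →ₗ[ℝ] Euc N :=
    (vectorSpan ℝ (s : Set (Euc N))).subtype.coprod (LinearMap.toSpanSingleton ℝ _ (a - z))
  have hL : ∀ q, L q = (q.1 : Euc N) + q.2 • (a - z) := fun q => by simp [L]
  have hinj : Function.Injective L := by
    rw [injective_iff_map_eq_zero]
    rintro ⟨v, t⟩ h
    rw [hL] at h
    have ht : t = 0 := by
      apply hind
      have : t • (a - z) = -(v : Euc N) := by
        rw [eq_neg_iff_add_eq_zero, add_comm]; exact h
      rw [this]
      exact Submodule.neg_mem _ v.2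
    subst ht
    simpa using h
  have hce : Topology.IsClosedEmbedding (fun q : vectorSpan ℝ (s : Set (Euc N)) × ℝ => z + L q) :=
      (Homeomorph.addLeft z).isClosedEmbedding.comp
        (LinearMap.isClosedEmbedding_of_injective (LinearMap.ker_eq_bot.2 hinj))
  have heq : (fun q : vectorSpan ℝ (s : Set (Euc N)) × ℝ => z + L q) =
      fun q => z + (q.1 : Euc N) + q.2 • (a - z) := by
    funext q
    rw [hL, add_assoc]
  rw [heq] at hce
  exact ⟨hce.injective, hce.isCompact_preimage (σ.finite_toSet.isCompact_convexHull ℝ)⟩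

lemma half_nhds {s : Finset (Euc N)} {z a : Euc N} 
    (hnb : {v : vectorSpan ℝ (s : Set (Euc N)) | z + (v : Euc N) ∈ convexHull ℝ (s : Set (Euc N))} ∈
      nhds (0 : vectorSpan ℝ (s : Set (Euc N)))) :
    ∀ᶠ q : vectorSpan ℝ (s : Set (Euc N)) × ℝ in nhds 0, 0 ≤ q.2 →
      z + (q.1 : Euc N) + q.2 • (a - z) ∈
        convexHull ℝ ((insert a s : Finset (Euc N)) : Set (Euc N)) := by
  have hc : ContinuousAt (fun q : vectorSpan ℝ (s : Set (Euc N)) × ℝ => (1 - q.2)⁻¹ • q.1) 0 := by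
    apply ContinuousAt.fun_smul
    · exact ContinuousAt.inv₀ (by fun_prop) (by simp)
    · fun_prop
  have h1 : ∀ᶠ q : vectorSpan ℝ (s : Set (Euc N)) × ℝ in nhds 0,
      z + (((1 - q.2)⁻¹ • q.1 : vectorSpan ℝ (s : Set (Euc N))) : Euc N) ∈
        convexHull ℝ (s : Set (Euc N)) := by
    have : Tendsto (fun q : vectorSpan ℝ (s : Set (Euc N)) × ℝ => (1 - q.2)⁻¹ • q.1) (nhds 0)
        (nhds 0) := by
      have := hc.tendsto
      simpa using this
    exact this hnb
  have h2 : ∀ᶠ q : vectorSpan ℝ (s : Set (Euc N)) × ℝ in nhds 0, q.2 < 1 :=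
    (continuous_snd.tendsto (0 : vectorSpan ℝ (s : Set (Euc N)) × ℝ)).eventually
      (gt_mem_nhds (by simp))
  filter_upwards [h1, h2] with q hq hq1 hq0
  have hne : (1 - q.2) ≠ 0 := by linarith
  have hsub : (s : Set (Euc N)) ⊆ ((insert a s : Finset (Euc N)) : Set (Euc N)) := by
    simp
  have hconv := (convex_convexHull ℝ ((insert a s : Finset (Euc N)) : Set (Euc N)))
    (convexHull_mono hsub hq) (subset_convexHull ℝ _ (show a ∈ _ by simp))
    (by linarith : 0 ≤ 1 - q.2) hq0 (by ring)
  convert hconv using 1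
  rw [smul_add, Submodule.coe_smul, smul_smul, mul_inv_cancel₀ hne, one_smul, smul_sub, sub_smul,
    one_smul]
  abel

lemma half_surj {s : Finset (Euc N)} (hs : s.Nonempty) {z a x : Euc N}
    (hz : z ∈ convexHull ℝ (s : Set (Euc N)))
    (hx : x ∈ convexHull ℝ ((insert a s : Finset (Euc N)) : Set (Euc N))) :
    ∃ q : vectorSpan ℝ (s : Set (Euc N)) × ℝ, 0 ≤ q.2 ∧ z + (q.1 : Euc N) + q.2 • (a - z) = x := by
  rw [Finset.coe_insert, convexHull_insert (by simpa using hs), convexJoin_singleton_left] at hx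
  simp only [Set.mem_iUnion] at hx
  obtain ⟨y, hy, hx⟩ := hx
  obtain ⟨t, u, ht, hu, htu, rfl⟩ := hx
  refine ⟨(u • ⟨y - z, sub_mem_of_hull hy hz⟩, t), ht, ?_⟩
  have : u = 1 - t := by linarith
  subst this
  simp only [Submodule.coe_smul]
  module

lemma chart_two {n : ℕ} {s : Finset (Euc N)} (hs : s.Nonempty) {z a b : Euc N} {S : Set (Euc N)}
    (hz : z ∈ convexHull ℝ (s : Set (Euc N)))
    (hnb : {v : vectorSpan ℝ (s : Set (Euc N)) | z + (v : Euc N) ∈ convexHull ℝ (s : Set (Euc N))} ∈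
      nhds (0 : vectorSpan ℝ (s : Set (Euc N))))
    (ha : a ∉ affineSpan ℝ (s : Set (Euc N))) (hb : b ∉ affineSpan ℝ (s : Set (Euc N)))
    (hab : convexHull ℝ ((insert a s : Finset (Euc N)) : Set (Euc N)) ∩
      convexHull ℝ ((insert b s : Finset (Euc N)) : Set (Euc N)) ⊆ convexHull ℝ (s : Set (Euc N)))
    (hfr : Module.finrank ℝ (vectorSpan ℝ (s : Set (Euc N))) + 1 = n)
    (hS : convexHull ℝ ((insert a s : Finset (Euc N)) : Set (Euc N)) ∪
      convexHull ℝ ((insert b s : Finset (Euc N)) : Set (Euc N)) ⊆ S)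
    (hS' : convexHull ℝ ((insert a s : Finset (Euc N)) : Set (Euc N)) ∪
      convexHull ℝ ((insert b s : Finset (Euc N)) : Set (Euc N)) ∈ nhdsWithin z S) :
    HasChart n S z := by
  have hinda := half_chart hz ha
  have hindb := half_chart hz hb
  obtain ⟨hinja, hcpa⟩ := half_compact (insert a s) hinda
  obtain ⟨hinjb, hcpb⟩ := half_compact (insert b s) hindb
  have hna := half_nhds (a := a) hnb
  have hnb' := half_nhds (a := b) hnb
  let ψ : vectorSpan ℝ (s : Set (Euc N)) × ℝ → Euc N := fun q =>
    z + (q.1 : Euc N) + max q.2 0 • (a - z) + max (-q.2) 0 • (b - z)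
  have hψa : ∀ q : vectorSpan ℝ (s : Set (Euc N)) × ℝ, 0 ≤ q.2 →
      ψ q = z + (q.1 : Euc N) + q.2 • (a - z) := by
    intro q hq
    simp only [ψ]
    rw [max_eq_left hq, max_eq_right (by linarith), zero_smul, add_zero]
  have hψb : ∀ q : vectorSpan ℝ (s : Set (Euc N)) × ℝ, q.2 ≤ 0 →
      ψ q = z + (q.1 : Euc N) + (-q.2) • (b - z) := by
    intro q hq
    simp only [ψ]
    rw [max_eq_right hq, max_eq_left (by linarith), zero_smul, add_zero]
  let Da : Set (vectorSpan ℝ (s : Set (Euc N)) × ℝ) := {q | 0 ≤ q.2 ∧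
    z + (q.1 : Euc N) + q.2 • (a - z) ∈
      convexHull ℝ ((insert a s : Finset (Euc N)) : Set (Euc N))}
  let Db : Set (vectorSpan ℝ (s : Set (Euc N)) × ℝ) := {q | q.2 ≤ 0 ∧
    z + (q.1 : Euc N) + (-q.2) • (b - z) ∈
      convexHull ℝ ((insert b s : Finset (Euc N)) : Set (Euc N))}
  have hDa : IsCompact Da := hcpa.inter_left (isClosed_le continuous_const continuous_snd)
  let flip : (vectorSpan ℝ (s : Set (Euc N)) × ℝ) ≃ₜ (vectorSpan ℝ (s : Set (Euc N)) × ℝ) :=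
    (Homeomorph.refl _).prodCongr (Homeomorph.neg ℝ)
  have hDb : IsCompact Db := by
    have h1 : IsCompact (flip ⁻¹' _) := flip.isClosedEmbedding.isCompact_preimage hcpb
    exact h1.inter_left (isClosed_le continuous_snd continuous_const)
  have hab' : ∀ p ∈ Da, ∀ q ∈ Db, ψ p = ψ q → p = q := by
    intro p hp q hq hpq
    have hp2 := hψa p hp.1
    have hq2 := hψb q hq.1
    have hm : ψ p ∈ convexHull ℝ (s : Set (Euc N)) :=
      hab ⟨hp2 ▸ hp.2, hpq ▸ hq2 ▸ hq.2⟩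
    have hm' := sub_mem_of_hull hm hz
    have h1 : p.2 = 0 := by
      apply hinda
      have := Submodule.sub_mem _ hm' p.1.2
      rw [hp2] at this
      convert this using 1
      abel
    have h2 : -q.2 = 0 := by
      apply hindb
      rw [hpq] at hm'
      have := Submodule.sub_mem _ hm' q.1.2
      rw [hq2] at this
      convert this using 1
      abel
    rw [hp2, hq2, h1, h2] at hpq
    refine Prod.ext (Subtype.ext (by simpa using hpq)) (by linarith)
  have himg : ψ '' (Da ∪ Db) = convexHull ℝ ((insert a s : Finset (Euc N)) : Set (Euc N)) ∪
      convexHull ℝ ((insert b s : Finset (Euc N)) : Set (Euc N)) := by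
    ext x
    constructor
    · rintro ⟨q, hq | hq, rfl⟩
      · left; rw [hψa q hq.1]; exact hq.2
      · right; rw [hψb q hq.1]; exact hq.2
    · rintro (hx | hx)
      · obtain ⟨q, hq0, hq⟩ := half_surj hs hz hx
        exact ⟨q, Or.inl ⟨hq0, hq ▸ hx⟩, by rw [hψa q hq0, hq]⟩
      · obtain ⟨q, hq0, hq⟩ := half_surj hs hz hx
        have h0 : (q.1, -q.2).2 ≤ 0 := by simpa using hq0
        refine ⟨(q.1, -q.2), Or.inr ⟨h0, ?_⟩, ?_⟩
        · simpa [hq] using hx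
        · rw [hψb _ h0]
          simpa using hq
  refine ⟨vectorSpan ℝ (s : Set (Euc N)) × ℝ, inferInstance, inferInstance, inferInstance,
    Da ∪ Db, ψ, by simpa using hfr, hDa.union hDb, ?_, ?_, ?_, ?_, by rw [himg]; exact hS,
    by rw [himg]; exact hS'⟩
  · have hf : Tendsto flip (nhds 0) (nhds 0) := by
      have h0 : flip 0 = 0 := by
        refine Prod.ext rfl ?_
        simp [flip]
      have := flip.continuous.tendsto 0
      rwa [h0] at this
    filter_upwards [hna, hf.eventually hnb'] with q h1 h2
    rcases le_total 0 q.2 with h | h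
    · exact Or.inl ⟨h, h1 h⟩
    · exact Or.inr ⟨h, h2 (by simpa [flip] using h)⟩
  · simp only [ψ]; fun_prop
  · rintro p (hp | hp) q (hq | hq) hpq
    · rw [hψa p hp.1, hψa q hq.1] at hpq
      exact hinja hpq
    · exact hab' p hp q hq hpq
    · exact (hab' q hq p hp hpq.symm).symm
    · rw [hψb p hp.1, hψb q hq.1] at hpq
      have := hinjb (a₁ := flip p) (a₂ := flip q) hpq
      exact flip.injective this
  · simp [ψ]

end Charts

section Main

lemma local_nhds (K : SimplicialComplex ℝ (Euc N)) (hfin : K.faces.Finite) (z : Euc N)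
    {C : Set (Euc N)} (hC : ∀ t ∈ K.faces, z ∈ convexHull ℝ (t : Set (Euc N)) →
      convexHull ℝ (t : Set (Euc N)) ⊆ C) : C ∈ nhdsWithin z K.space := by
  have hcl : IsClosed (⋃ t ∈ {t ∈ K.faces | z ∉ convexHull ℝ (t : Set (Euc N))},
      convexHull ℝ (t : Set (Euc N))) :=
    (hfin.subset (fun t ht => ht.1)).isClosed_biUnion fun t _ =>
      t.finite_toSet.isClosed_convexHull ℝ
  refine mem_nhdsWithin.2 ⟨_, hcl.isOpen_compl, ?_, ?_⟩
  · simp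
  · rintro x ⟨hx, hxS⟩
    obtain ⟨t, ht, hxt⟩ := SimplicialComplex.mem_space_iff.1 hxS
    by_cases hzt : z ∈ convexHull ℝ (t : Set (Euc N))
    · exact hC t ht hzt hxt
    · exact absurd (Set.mem_biUnion (show t ∈ {t ∈ K.faces | z ∉ convexHull ℝ (t : Set (Euc N))}
        from ⟨ht, hzt⟩) hxt) hx

lemma notMem_span {K : SimplicialComplex ℝ (Euc N)} {s : Finset (Euc N)} {a : Euc N}
    (ha : a ∉ s) (h : insert a s ∈ K.faces) : a ∉ affineSpan ℝ (s : Set (Euc N)) := by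
  have h1 := K.indep h
  have h2 := h1.notMem_affineSpan_sdiff ⟨a, by simp⟩ Set.univ
  intro hmem
  apply h2
  refine affineSpan_mono ℝ ?_ hmem
  intro y hy
  have hne : y ≠ a := fun h => ha (h ▸ hy)
  exact ⟨⟨y, Finset.mem_insert_of_mem hy⟩, ⟨Set.mem_univ _, fun h => hne (congrArg Subtype.val h)⟩,
    rfl⟩

lemma chart_of_generic {n : ℕ} (hn : 2 ≤ n) (K : SimplicialComplex ℝ (Euc N))
    (hfin : K.faces.Finite) (hdim : IsNDim n K)
    (h2 : ∀ η ∈ K.faces, η.card = n → (nSimplicesOn n K η).ncard = 2) {z : Euc N}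
    (hz : z ∈ K.space)
    (hgen : ∀ s ∈ K.faces, s.card ≤ n - 1 → z ∉ convexHull ℝ (s : Set (Euc N))) :
    HasChart n K.space z := by
  have hex : ∃ m, ∃ s ∈ K.faces, z ∈ convexHull ℝ (s : Set (Euc N)) ∧ s.card = m := by
    obtain ⟨s, hs, hzs⟩ := SimplicialComplex.mem_space_iff.1 hz
    exact ⟨_, s, hs, hzs, rfl⟩
  obtain ⟨s, hs, hzs, hcard⟩ := Nat.find_spec hex
  have hmin : ∀ t ∈ K.faces, z ∈ convexHull ℝ (t : Set (Euc N)) → s.card ≤ t.card := by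
    intro t ht hzt
    rw [hcard]
    exact Nat.find_min' hex ⟨t, ht, hzt, rfl⟩
  have hsub : ∀ t ⊆ s, z ∈ convexHull ℝ (t : Set (Euc N)) → t = s := by
    intro t hts hzt
    have hne : t.Nonempty := by
      rw [Finset.nonempty_iff_ne_empty]
      rintro rfl
      simp at hzt
    exact Finset.eq_of_subset_of_card_le hts (hmin t (K.down_closed hs hts hne) hzt)
  have hsup : ∀ t ∈ K.faces, z ∈ convexHull ℝ (t : Set (Euc N)) → s ⊆ t := by
    intro t ht hzt
    have h := K.inter_subset_convexHull hs ht ⟨hzs, hzt⟩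
    rw [← Finset.coe_inter] at h
    have := hsub _ Finset.inter_subset_left h
    exact Finset.inter_eq_left.1 this
  have hsne : s.Nonempty := SimplicialComplex.nonempty_of_mem_faces hs
  obtain ⟨w, hw0, hw1, hwz⟩ := Finset.mem_convexHull'.1 hzs
  have hpos : ∀ y ∈ s, 0 < w y := by
    have hf1 : ∑ y ∈ s with 0 < w y, w y = 1 := by
      rw [← hw1]
      refine Finset.sum_filter_of_ne fun y hy hne => lt_of_le_of_ne (hw0 y hy) hne.symm
    have hfz : ∑ y ∈ s with 0 < w y, w y • y = z := by
      rw [← hwz]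
      refine Finset.sum_filter_of_ne fun y hy hne => lt_of_le_of_ne (hw0 y hy) ?_
      rintro h
      rw [← h, zero_smul] at hne
      exact hne rfl
    have heq := hsub (s.filter fun y => 0 < w y) (Finset.filter_subset _ _)
      (Finset.mem_convexHull'.2 ⟨w, fun y hy => hw0 y (Finset.mem_filter.1 hy).1, hf1, hfz⟩)
    intro y hy
    rw [← heq] at hy
    exact (Finset.mem_filter.1 hy).2
  have hnb := nhds_of_pos hsne hpos hw1 hwz
  have hcl : s.card = n ∨ s.card = n + 1 := by
    have h1 := hdim.1 s hs
    have h3 : ¬ s.card ≤ n - 1 := fun h => hgen s hs h hzs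
    omega
  have hfr : Module.finrank ℝ (vectorSpan ℝ (s : Set (Euc N))) + 1 = s.card := by
    obtain ⟨c, hc⟩ := Nat.exists_eq_succ_of_ne_zero (Finset.card_pos.2 hsne).ne'
    have h := (K.indep hs).finrank_vectorSpan (n := c) (by simpa using hc)
    have hr : Set.range (fun i : s => (i : Euc N)) = (s : Set (Euc N)) := Subtype.range_coe
    rw [hr] at h
    rw [h, hc]
  rcases hcl with hc | hc
  · obtain ⟨σ₁, σ₂, hne, hσ⟩ := Set.ncard_eq_two.1 (h2 s hs hc)
    have key : ∀ σ ∈ nSimplicesOn n K s, ∃ a, a ∉ s ∧ insert a s = σ := by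
      rintro σ ⟨_, h, hsσ⟩
      have hlt : (σ \ s).card = 1 := by
        rw [Finset.card_sdiff_of_subset hsσ]; omega
      obtain ⟨a, ha⟩ := Finset.card_eq_one.1 hlt
      have haσ : a ∈ σ \ s := by rw [ha]; simp
      refine ⟨a, (Finset.mem_sdiff.1 haσ).2, ?_⟩
      rw [Finset.insert_eq, ← ha, Finset.sdiff_union_of_subset hsσ]
    have m1 : σ₁ ∈ nSimplicesOn n K s := by rw [hσ]; simp
    have m2 : σ₂ ∈ nSimplicesOn n K s := by rw [hσ]; simp
    obtain ⟨a, ha, rfl⟩ := key σ₁ m1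
    obtain ⟨b, hb, rfl⟩ := key σ₂ m2
    have hab : a ≠ b := fun h => hne (by rw [h])
    refine chart_two hsne hzs hnb (notMem_span ha m1.1) (notMem_span hb m2.1) ?_ (by omega)
      (Set.union_subset (SimplicialComplex.convexHull_subset_space m1.1)
        (SimplicialComplex.convexHull_subset_space m2.1)) ?_
    · refine (K.inter_subset_convexHull m1.1 m2.1).trans (convexHull_mono ?_)
      rintro x ⟨hx1, hx2⟩
      simp only [Finset.coe_insert, Set.mem_insert_iff] at hx1 hx2
      rcases hx1 with rfl | hx1
      · exact hx2.resolve_left hab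
      · exact hx1
    · refine local_nhds K hfin z fun t ht hzt => ?_
      have hst := hsup t ht hzt
      have hc1 := hdim.1 t ht
      have hc2 := Finset.card_le_card hst
      rcases Nat.lt_or_ge t.card (n + 1) with hlt | hge
      · have : s = t := Finset.eq_of_subset_of_card_le hst (by omega)
        subst this
        exact Set.subset_union_of_subset_left (convexHull_mono (by simp)) _
      · have hmem : t ∈ nSimplicesOn n K s := ⟨ht, by omega, hst⟩
        rw [hσ] at hmem
        rcases hmem with rfl | h
        · exact Set.subset_union_left
        · rw [Set.mem_singleton_iff] at h
          subst h
          exact Set.subset_union_right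
  · refine chart_one hzs hnb (by omega) (SimplicialComplex.convexHull_subset_space hs) ?_
    refine local_nhds K hfin z fun t ht hzt => ?_
    have hst := hsup t ht hzt
    have := Finset.eq_of_subset_of_card_le hst (by have := hdim.1 t ht; omega)
    rw [this]

end Main

/-- If `K` is a finite `n`-dimensional simplicial complex (`n ≥ 2`) in which
every `(n-1)`-simplex is a face of precisely two `n`-simplices, then the
stratification rank of every simplex of dimension `p ≤ n - 2` equals `1`. -/
theorem strRank_eq_one {N n : ℕ} (hn : 2 ≤ n) (K : SimplicialComplex ℝ (Euc N))
    (hfin : K.faces.Finite) (hdim : IsNDim n K)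
    (h2 : ∀ η ∈ K.faces, η.card = n → (nSimplicesOn n K η).ncard = 2) :
    ∀ τ ∈ K.faces, ∀ p : ℕ, τ.card = p + 1 → p ≤ n - 2 → strRank n K τ = 1 := by
  intro τ hτ p _ _
  unfold strRank
  refine dif_neg ?_
  rintro ⟨r, hr, hsub⟩
  have hτne : τ.Nonempty := SimplicialComplex.nonempty_of_mem_faces hτ
  obtain ⟨x, hx⟩ : (openSimplex τ).Nonempty :=
    Set.Nonempty.intrinsicInterior (convex_convexHull ℝ _)
      (convexHull_nonempty_iff.2 (by simpa using hτne))
  obtain ⟨hxS, U, hU, hUS, h, hapex⟩ := hsub hx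
  have hxU : x ∈ U := mem_of_mem_nhdsWithin hxS hU
  obtain ⟨V, hV, hxV, hVU⟩ := mem_nhdsWithin.1 hU
  obtain ⟨k, l, hk, hl, hkm, hlm, hlk, hkl, hk1⟩ := unpack_homeo h
  have hmem : ∀ y : Euc (n - 1), ((0 : ℝ × ℝ), y) ∈ Tcone r ×ˢ (Set.univ : Set (Euc (n - 1))) :=
    fun y => ⟨zero_mem_Tcone r, Set.mem_univ _⟩
  have hφc : Continuous fun y : Euc (n - 1) => l (0, y) :=
    hl.comp_continuous (by fun_prop) hmem
  have hφi : Function.Injective fun y : Euc (n - 1) => l (0, y) := by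
    intro a b hab
    have := congrArg k hab
    simp only [hkl _ (hmem _)] at this
    exact (Prod.ext_iff.1 this).2
  have hφx : l (0, (k x).2) = x := by
    have h0 : (k x).1 = 0 := by rw [hk1 x hxU, hapex hxU]
    rw [← h0]
    exact hlk x hxU
  obtain ⟨y, hyV, hy⟩ := exists_generic hn {s ∈ K.faces | s.card ≤ n - 1}
    (hfin.subset fun s hs => hs.1)
    (fun s hs => ⟨SimplicialComplex.nonempty_of_mem_faces hs.1, hs.2⟩) hφc hφi hV
    (y₀ := (k x).2) (by rw [hφx]; exact hxV)
  have hzU : l (0, y) ∈ U := hlm (hmem y)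
  refine no_cone_chart hn hr (z := l (0, y)) (S := K.space) (U := U)
    (chart_of_generic hn K hfin hdim h2 (hUS hzU) fun s hs hc => hy s ⟨hs, hc⟩)
    (mem_nhdsWithin.2 ⟨V, hV, hyV, hVU⟩) hUS hzU hk hl hkm hlm hlk hkl ?_
  rw [hkl _ (hmem y)]

end AngleDefectPaper
end
end

section
/- Let K be a finite n-dimensional simplicial complex, with n ≥ 2, and suppose that each (n−1)-simplex of K is a face of precisely two n-simplices of K. Then for every p-simplex τ^p of K with 0 ≤ p ≤ n−2, one has 2·f_{n−p−2}(link(τ^p, K)) = (n−p)·f_{n−p−1}(link(τ^p, K)). -/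
open Filter MeasureTheory Geometry
open scoped BigOperators

noncomputable section

attribute [local instance 0] Classical.propDecidable

namespace AngleDefectPaper

variable {N : ℕ}

/-- If `K` is a finite `n`-dimensional simplicial complex (`n ≥ 2`) in which
every `(n-1)`-simplex is a face of precisely two `n`-simplices, then for every
`p`-simplex `τ` of `K` with `p ≤ n - 2` one has
`2 f_{n-p-2}(link(τ, K)) = (n - p) f_{n-p-1}(link(τ, K))`. -/
theorem link_face_count {N n : ℕ} (hn : 2 ≤ n) (K : SimplicialComplex ℝ (Euc N))
    (hfin : K.faces.Finite) (hdim : IsNDim n K)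
    (h2 : ∀ η ∈ K.faces, η.card = n → (nSimplicesOn n K η).ncard = 2) :
    ∀ τ ∈ K.faces, ∀ p : ℕ, τ.card = p + 1 → p ≤ n - 2 →
      2 * fcount (linkFaces K τ) (n - p - 2) =
        (n - p) * fcount (linkFaces K τ) (n - p - 1) := by
  intro τ hτ p hp hpn
  have hdc : ∀ s ∈ K.faces, ∀ t, t ⊆ s → t.Nonempty → t ∈ K.faces :=
    fun s hs t hts ht => (K.isRelLowerSet_faces hs).2 hts ht
  have hAf : {s ∈ linkFaces K τ | s.card = n - p - 2 + 1}.Finite :=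
    hfin.subset fun s hs => hs.1.1
  have hBf : {s ∈ linkFaces K τ | s.card = n - p - 1 + 1}.Finite :=
    hfin.subset fun s hs => hs.1.1
  unfold fcount
  rw [Set.ncard_eq_toFinset_card _ hAf, Set.ncard_eq_toFinset_card _ hBf, mul_comm 2,
    mul_comm (n - p)]
  apply Finset.card_mul_eq_card_mul (fun a b : Finset (Euc N) => a ⊆ b)
  · intro a ha
    simp only [Set.Finite.mem_toFinset, Set.mem_setOf_eq, linkFaces] at ha
    obtain ⟨⟨haK, hdisj, hunion⟩, hcard⟩ := ha
    have hc : (τ ∪ a).card = n := by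
      rw [Finset.card_union_of_disjoint hdisj]; omega
    rw [← h2 _ hunion hc, ← Set.ncard_coe_finset]
    refine Set.ncard_congr (fun b _ => τ ∪ b) ?_ ?_ ?_
    · intro b hb
      simp only [Finset.bipartiteAbove, Finset.coe_filter, Set.Finite.mem_toFinset,
        Set.mem_setOf_eq, linkFaces] at hb
      obtain ⟨⟨⟨hbK, hbd, hbu⟩, hbc⟩, hab⟩ := hb
      refine ⟨hbu, ?_, Finset.union_subset_union_right hab⟩
      rw [Finset.card_union_of_disjoint hbd]; omega
    · intro b c hb hc hbc
      simp only [Finset.bipartiteAbove, Finset.coe_filter, Set.Finite.mem_toFinset,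
        Set.mem_setOf_eq, linkFaces] at hb hc
      have h1 := Finset.union_sdiff_cancel_left hb.1.1.2.1
      have h3 := Finset.union_sdiff_cancel_left hc.1.1.2.1
      rw [← h1, ← h3]
      exact congrArg (· \ τ) hbc
    · rintro σ ⟨hσ, hσc, hsub⟩
      have hτσ : τ ⊆ σ := Finset.subset_union_left.trans hsub
      have haσ : a ⊆ σ := Finset.subset_union_right.trans hsub
      have hu : τ ∪ (σ \ τ) = σ := Finset.union_sdiff_of_subset hτσ
      have hcd : (σ \ τ).card = n - p := by
        rw [Finset.card_sdiff_of_subset hτσ]; omega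
      refine ⟨σ \ τ, ?_, hu⟩
      simp only [Finset.bipartiteAbove, Finset.coe_filter, Set.Finite.mem_toFinset,
        Set.mem_setOf_eq, linkFaces]
      refine ⟨⟨⟨hdc σ hσ _ Finset.sdiff_subset (Finset.card_pos.1 (by omega)),
        Finset.disjoint_sdiff, by rw [hu]; exact hσ⟩, by omega⟩, ?_⟩
      exact Finset.subset_sdiff.2 ⟨haσ, hdisj.symm⟩
  · intro b hb
    simp only [Set.Finite.mem_toFinset, Set.mem_setOf_eq, linkFaces] at hb
    obtain ⟨⟨hbK, hdisj, hunion⟩, hcard⟩ := hb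
    have : Finset.bipartiteBelow (fun a b : Finset (Euc N) => a ⊆ b) hAf.toFinset b
        = Finset.powersetCard (n - p - 1) b := by
      ext a
      simp only [Finset.bipartiteBelow, Finset.mem_filter, Set.Finite.mem_toFinset,
        Set.mem_setOf_eq, linkFaces, Finset.mem_powersetCard]
      constructor
      · rintro ⟨⟨_, hc⟩, hab⟩
        exact ⟨hab, by omega⟩
      · rintro ⟨hab, hc⟩
        exact ⟨⟨⟨hdc b hbK a hab (Finset.card_pos.1 (by omega)),
          hdisj.mono_right hab,
          hdc _ hunion _ (Finset.union_subset_union_right hab)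
            ((Finset.card_pos.1 (by omega : 0 < τ.card)).mono Finset.subset_union_left)⟩,
          by omega⟩, hab⟩
    rw [this, Finset.card_powersetCard, hcard]
    obtain ⟨m, hm⟩ : ∃ m, n - p = m + 1 := ⟨n - p - 1, by omega⟩
    rw [hm]
    simp

end AngleDefectPaper
end
end

section
/- Let n be an odd integer with n ≥ 3, let σ^n be an n-simplex in Euclidean space, and let τ^p be a p-face of σ^n, where p is an even integer with 0 ≤ p ≤ n−2. Then α(τ^p, σ^n) − (1/2)·Σ_{i=p+1}^{n−2} (−1)^{i+1} Σ_{σ^n ≻ η^i ≻ τ^p} α(η^i, σ^n) = 1/2 − (n−p)/4, where the inner sum is over all i-faces η^i of σ^n that have τ^p as a face. -/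
open Filter MeasureTheory Geometry
open scoped BigOperators

noncomputable section

attribute [local instance 0] Classical.propDecidable

namespace AngleDefectPaper

variable {N : ℕ}

/-- The thickened simplex. -/
def cyl (σ : Finset (Euc N)) : Set (Euc N) :=
  {y : Euc N | ∃ c ∈ convexHull ℝ (σ : Set (Euc N)),
        ∃ w ∈ (vectorSpan ℝ (σ : Set (Euc N)))ᗮ, y = c + w}

lemma aff_sum (f : Euc N →ᵃ[ℝ] ℝ) (s : Finset (Euc N)) (w : Euc N → ℝ)
    (hw : ∑ u ∈ s, w u = 1) : f (∑ u ∈ s, w u • u) = ∑ u ∈ s, w u * f u := by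
  have h := Finset.map_affineCombination s (id : Euc N → Euc N) w hw f
  rw [Finset.affineCombination_eq_linear_combination _ _ _ hw,
    Finset.affineCombination_eq_linear_combination _ _ _ hw] at h
  simpa using h

lemma mem_span_sum (s : Finset (Euc N)) (x : Euc N)
    (hx : x ∈ affineSpan ℝ (s : Set (Euc N))) :
    ∃ w : Euc N → ℝ, ∑ u ∈ s, w u = 1 ∧ ∑ u ∈ s, w u • u = x := by
  have hx' : x ∈ affineSpan ℝ (Set.range ((↑) : s → Euc N)) := by
    simpa using hx
  obtain ⟨w, hw, h⟩ := eq_affineCombination_of_mem_affineSpan_of_fintype hx'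
  rw [Finset.affineCombination_eq_linear_combination _ _ _ hw] at h
  refine ⟨fun u => if hu : u ∈ s then w ⟨u, hu⟩ else 0, ?_, ?_⟩
  · rw [← hw, ← Finset.sum_coe_sort s]
    exact Finset.sum_congr rfl fun i _ => by simp
  · rw [h, ← Finset.sum_coe_sort s]
    exact Finset.sum_congr rfl fun i _ => by simp

lemma exists_coords (σ : Finset (Euc N)) (hind : AffineIndependent ℝ ((↑) : σ → Euc N))
    (hne : σ.Nonempty) :
    ∃ f : Euc N → Euc N →ᵃ[ℝ] ℝ,
      (∀ u ∈ σ, ∀ v ∈ σ, f u v = if u = v then 1 else 0) ∧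
      ∀ y, (y ∈ cyl σ ↔ ∀ u ∈ σ, 0 ≤ f u y) := by
  obtain ⟨t, hst, hti, htop⟩ := exists_subset_affineIndependent_affineSpan_eq_top
    (s := (σ : Set (Euc N))) hind
  let b : AffineBasis t ℝ (Euc N) := ⟨((↑) : t → Euc N), hti, by simpa using htop⟩
  obtain ⟨v0, hv0⟩ := hne
  set V := vectorSpan ℝ (σ : Set (Euc N)) with hV
  let A : Euc N →ᵃ[ℝ] Euc N :=
    (V.starProjection : Euc N →ₗ[ℝ] Euc N).toAffineMap +
      AffineMap.const ℝ (Euc N) (v0 - V.starProjection v0)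
  have hA : ∀ y, A y = V.starProjection (y - v0) + v0 := by
    intro y
    simp only [A, AffineMap.coe_add, Pi.add_apply, LinearMap.coe_toAffineMap,
      ContinuousLinearMap.coe_coe, AffineMap.const_apply, map_sub]
    abel
  let g : Euc N → Euc N →ᵃ[ℝ] ℝ := fun u => if hu : u ∈ t then b.coord ⟨u, hu⟩ else 0
  have hg : ∀ u ∈ σ, ∀ v ∈ σ, g u v = if u = v then 1 else 0 := by
    intro u hu v hv
    have hu' : u ∈ t := hst hu
    have hv' : v ∈ t := hst hv
    simp only [g, dif_pos hu']
    have := b.coord_apply ⟨u, hu'⟩ ⟨v, hv'⟩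
    have hb : b ⟨v, hv'⟩ = v := rfl
    rw [hb] at this
    rw [this]
    simp
  have hv0S : v0 ∈ affineSpan ℝ (σ : Set (Euc N)) := subset_affineSpan _ _ hv0
  have hAS : ∀ c ∈ affineSpan ℝ (σ : Set (Euc N)), ∀ w ∈ Vᗮ, A (c + w) = c := by
    intro c hc w hw
    have h1 : c - v0 ∈ V := by
      rw [hV, ← direction_affineSpan]
      exact AffineSubspace.vsub_mem_direction hc hv0S
    have h2 : V.starProjection (c - v0) = c - v0 :=
      Submodule.starProjection_eq_self_iff.mpr h1
    have h3 : V.starProjection w = 0 := by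
      rw [Submodule.starProjection_apply, Submodule.orthogonalProjectionOnto_eq_zero_iff.mpr hw]; rfl
    rw [hA, show c + w - v0 = (c - v0) + w by abel, map_add, h2, h3]
    abel
  have hAm : ∀ y, A y ∈ affineSpan ℝ (σ : Set (Euc N)) := by
    intro y
    rw [hA]
    have : V.starProjection (y - v0) ∈ (affineSpan ℝ (σ : Set (Euc N))).direction := by
      rw [direction_affineSpan]
      exact Submodule.starProjection_apply_mem _ _
    exact AffineSubspace.vadd_mem_of_mem_direction this hv0S
  have hgw : ∀ w : Euc N → ℝ, ∑ u ∈ σ, w u = 1 → ∀ v ∈ σ, g v (∑ u ∈ σ, w u • u) = w v := by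
    intro w hw v hv
    rw [aff_sum _ _ _ hw, Finset.sum_eq_single v]
    · rw [hg v hv v hv]; simp
    · intro u hu huv
      rw [hg v hv u hu, if_neg (Ne.symm huv), mul_zero]
    · exact fun h => absurd hv h
  refine ⟨fun u => (g u).comp A, ?_, ?_⟩
  · intro u hu v hv
    have := hAS v (subset_affineSpan _ _ hv) 0 (Submodule.zero_mem _)
    rw [add_zero] at this
    rw [AffineMap.comp_apply, this, hg u hu v hv]
  · intro y
    constructor
    · rintro ⟨c, hc, w, hw, rfl⟩ u hu
      rw [AffineMap.comp_apply, hAS c (convexHull_subset_affineSpan _ hc) w hw]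
      obtain ⟨k, hk0, hk1, rfl⟩ := Finset.mem_convexHull'.mp hc
      rw [hgw k hk1 u hu]
      exact hk0 u hu
    · intro h
      refine ⟨A y, ?_, y - A y, ?_, by abel⟩
      · obtain ⟨w, hw, hwy⟩ := mem_span_sum σ (A y) (hAm y)
        refine Finset.mem_convexHull'.mpr ⟨w, ?_, hw, hwy⟩
        intro u hu
        have := h u hu
        rwa [AffineMap.comp_apply, ← hwy, hgw w hw u hu] at this
      · rw [hA, show y - (V.starProjection (y - v0) + v0)
          = (y - v0) - V.starProjection (y - v0) by abel]
        exact Submodule.sub_starProjection_mem_orthogonal _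

/-- The fraction of the unit ball cut out by the half-spaces indexed by `J`. -/
def frac (M : Euc N → Euc N →ₗ[ℝ] ℝ) (J : Finset (Euc N)) : ℝ :=
  volume.real (Metric.ball (0 : Euc N) 1 ∩ {y | ∀ u ∈ J, 0 ≤ M u y}) /
    volume.real (Metric.ball (0 : Euc N) 1)

open scoped Pointwise in
lemma scale_cone (M : Euc N → Euc N →ₗ[ℝ] ℝ) (J : Finset (Euc N)) (g : Euc N) (ε : ℝ)
    (hε : 0 < ε) :
    volume.real (Metric.ball g ε ∩ {y | ∀ u ∈ J, 0 ≤ M u (y - g)}) =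
      ε ^ N * volume.real (Metric.ball (0 : Euc N) 1 ∩ {y | ∀ u ∈ J, 0 ≤ M u y}) := by
  have h : Metric.ball g ε ∩ {y | ∀ u ∈ J, 0 ≤ M u (y - g)} =
      g +ᵥ (ε • (Metric.ball (0 : Euc N) 1 ∩ {y | ∀ u ∈ J, 0 ≤ M u y})) := by
    ext y
    rw [Set.mem_vadd_set_iff_neg_vadd_mem, Set.mem_smul_set_iff_inv_smul_mem₀ hε.ne']
    have e : -g +ᵥ y = y - g := by rw [vadd_eq_add]; abel
    rw [e]
    simp only [Set.mem_inter_iff, Metric.mem_ball, Set.mem_ofPred_eq, map_smul, smul_eq_mul,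
      dist_eq_norm]
    refine and_congr ?_ ?_
    · rw [sub_zero, norm_smul, norm_inv, Real.norm_eq_abs, abs_of_pos hε, inv_mul_lt_iff₀ hε,
        mul_one]
    · exact forall₂_congr fun u _ => (mul_nonneg_iff_of_pos_left (inv_pos.mpr hε)).symm
  rw [h, Measure.real, measure_vadd, Measure.addHaar_smul, ENNReal.toReal_mul,
    ENNReal.toReal_ofReal (abs_nonneg _), abs_of_pos (pow_pos hε _)]
  simp [Measure.real]

lemma ball_pos : 0 < volume.real (Metric.ball (0 : Euc N) 1) :=
  ENNReal.toReal_pos (Metric.measure_ball_pos _ _ one_pos).ne' measure_ball_lt_top.ne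

lemma solidAngle_eq (σ : Finset (Euc N)) (f : Euc N → Euc N →ᵃ[ℝ] ℝ)
    (h1 : ∀ u ∈ σ, ∀ v ∈ σ, f u v = if u = v then 1 else 0)
    (h2 : ∀ y, (y ∈ cyl σ ↔ ∀ u ∈ σ, 0 ≤ f u y)) (η : Finset (Euc N)) (hη : η ⊆ σ)
    (hne : η.Nonempty) :
    solidAngle η σ = frac (fun u => (f u).linear) (σ \ η) := by
  unfold solidAngle
  apply Tendsto.limUnder_eq
  change Tendsto (fun ε => volume.real (Metric.ball (η.centroid ℝ id) ε ∩ cyl σ) /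
    volume.real (Metric.ball (η.centroid ℝ id) ε)) _ _
  set g := η.centroid ℝ id with hg
  have hcard : (0 : ℝ) < η.card := by exact_mod_cast hne.card_pos
  have hw : ∑ u ∈ η, ((fun _ => (η.card : ℝ)⁻¹) : Euc N → ℝ) u = 1 := by
    simp [hcard.ne']
  have hgs : g = ∑ u ∈ η, (η.card : ℝ)⁻¹ • u := by
    rw [hg, Finset.centroid_def, Finset.affineCombination_eq_linear_combination]
    · simp
    · simpa using hw
  have hfg : ∀ u ∈ σ, f u g = if u ∈ η then (η.card : ℝ)⁻¹ else 0 := by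
    intro u hu
    rw [hgs, aff_sum (f u) η (fun _ => (η.card : ℝ)⁻¹) hw]
    rw [Finset.sum_congr rfl fun v hv => by rw [h1 u hu v (hη hv)]]
    simp
  have hev : ∀ᶠ y in nhds g, ∀ u ∈ η, 0 ≤ f u y := by
    rw [Filter.eventually_all_finset]
    intro u hu
    have hc : Continuous (f u) := (f u).continuous_of_finiteDimensional
    have hp : 0 < f u g := by
      rw [hfg u (hη hu), if_pos hu]; positivity
    filter_upwards [hc.continuousAt.eventually (lt_mem_nhds hp)] with y hy using hy.le
  obtain ⟨δ, hδ, hδb⟩ := Metric.eventually_nhds_iff_ball.mp hev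
  refine tendsto_const_nhds.congr' ?_
  filter_upwards [Ioo_mem_nhdsGT hδ] with ε hε
  have hset : Metric.ball g ε ∩ cyl σ =
      Metric.ball g ε ∩ {y | ∀ u ∈ σ \ η, 0 ≤ (f u).linear (y - g)} := by
    ext y
    refine and_congr_right fun hy => ?_
    rw [h2]
    have hlin : ∀ u ∈ σ \ η, (f u).linear (y - g) = f u y := by
      intro u hu
      rw [Finset.mem_sdiff] at hu
      have := (f u).linearMap_vsub y g
      rw [vsub_eq_sub, vsub_eq_sub, hfg u hu.1, if_neg hu.2, sub_zero] at this
      exact this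
    constructor
    · intro h u hu
      rw [hlin u hu]
      exact h u (Finset.mem_sdiff.mp hu).1
    · intro h u hu
      by_cases hu' : u ∈ η
      · exact hδb y (Metric.ball_subset_ball hε.2.le hy) u hu'
      · have hm := Finset.mem_sdiff.mpr ⟨hu, hu'⟩
        rw [← hlin u hm]
        exact h u hm
  have hball : volume.real (Metric.ball g ε) =
      ε ^ N * volume.real (Metric.ball (0 : Euc N) 1) := by
    have := scale_cone (fun u => (f u).linear) ∅ g ε hε.1
    simpa using this
  rw [hset, scale_cone (fun u => (f u).linear) (σ \ η) g ε hε.1, hball, frac,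
    mul_div_mul_left _ _ (pow_pos hε.1 N).ne']

lemma incl_excl (H : Euc N → Set (Euc N)) (hH : ∀ u, MeasurableSet (H u)) (J : Finset (Euc N)) :
    ∀ A : Set (Euc N), volume A ≠ ⊤ →
    volume.real (A ∩ {y | ∀ u ∈ J, y ∉ H u}) =
      ∑ K ∈ J.powerset, (-1 : ℝ) ^ K.card * volume.real (A ∩ {y | ∀ u ∈ K, y ∈ H u}) := by
  induction J using Finset.induction_on with
  | empty => intro A _; simp
  | insert a s ha ih =>
    intro A hA
    rw [Finset.sum_powerset_insert ha, ← ih A hA]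
    have hA' : volume (A ∩ H a) ≠ ⊤ := measure_ne_top_of_subset Set.inter_subset_left hA
    have e : ∑ K ∈ s.powerset, (-1 : ℝ) ^ (insert a K).card *
        volume.real (A ∩ {y | ∀ u ∈ insert a K, y ∈ H u}) =
        - volume.real ((A ∩ H a) ∩ {y | ∀ u ∈ s, y ∉ H u}) := by
      rw [ih _ hA', ← Finset.sum_neg_distrib]
      refine Finset.sum_congr rfl fun K hK => ?_
      have haK : a ∉ K := fun h => ha (Finset.mem_powerset.mp hK h)
      have hs : A ∩ {y | ∀ u ∈ insert a K, y ∈ H u} =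
          (A ∩ H a) ∩ {y | ∀ u ∈ K, y ∈ H u} := by
        ext y; simp [and_assoc]
      rw [Finset.card_insert_of_notMem haK, pow_succ, hs]
      ring
    rw [e]
    have h := measureReal_inter_add_sdiff (μ := volume)
      (s := A ∩ {y | ∀ u ∈ s, y ∉ H u}) (hH a)
      (measure_ne_top_of_subset Set.inter_subset_left hA)
    have s1 : A ∩ {y | ∀ u ∈ s, y ∉ H u} ∩ H a = (A ∩ H a) ∩ {y | ∀ u ∈ s, y ∉ H u} := by
      ext y; simp only [Set.mem_inter_iff]; tauto
    have s2 : (A ∩ {y | ∀ u ∈ s, y ∉ H u}) \ H a =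
        A ∩ {y | ∀ u ∈ insert a s, y ∉ H u} := by
      ext y; simp only [Set.mem_sdiff, Set.mem_inter_iff, Set.mem_ofPred_eq,
        Finset.forall_mem_insert]; tauto
    rw [s1, s2] at h
    linarith

open scoped Pointwise in
lemma frac_symm (M : Euc N → Euc N →ₗ[ℝ] ℝ) (J : Finset (Euc N)) (hM : ∀ u ∈ J, M u ≠ 0) :
    frac M J = ∑ K ∈ J.powerset, (-1 : ℝ) ^ K.card * frac M K := by
  have hH : ∀ u, MeasurableSet {y | 0 ≤ M u y} := fun u =>
    (isClosed_le continuous_const (M u).continuous_of_finiteDimensional).measurableSet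
  have hie := incl_excl (fun u => {y | 0 ≤ M u y}) hH J (Metric.ball (0 : Euc N) 1)
    measure_ball_lt_top.ne
  have key : volume.real (Metric.ball (0 : Euc N) 1 ∩ {y | ∀ u ∈ J, 0 ≤ M u y}) =
      volume.real (Metric.ball (0 : Euc N) 1 ∩ {y | ∀ u ∈ J, y ∉ {y | 0 ≤ M u y}}) := by
    have h1 : Metric.ball (0 : Euc N) 1 ∩ {y | ∀ u ∈ J, 0 ≤ M u y} =
        -(Metric.ball (0 : Euc N) 1 ∩ {y | ∀ u ∈ J, M u y ≤ 0}) := by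
      ext y; simp
    rw [h1, Measure.real, Measure.measure_neg, Measure.real]
    congr 1
    apply measure_congr
    have hnull : ∀ u ∈ J, ∀ᵐ y ∂(volume : Measure (Euc N)), M u y ≠ 0 := by
      intro u hu
      have := Measure.addHaar_submodule (volume : Measure (Euc N)) (LinearMap.ker (M u))
        (by rw [Ne, LinearMap.ker_eq_top]; exact hM u hu)
      rw [ae_iff]
      convert this using 2
      ext y; simp
    have hall : ∀ᵐ y ∂(volume : Measure (Euc N)), ∀ u ∈ J, M u y ≠ 0 :=
      (Filter.eventually_all_finset J).mpr hnull
    filter_upwards [hall] with y hy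
    apply propext
    refine and_congr_right fun _ => forall₂_congr fun u hu => ?_
    have := hy u hu
    simp only [not_le]
    exact ⟨fun h => lt_of_le_of_ne h this, le_of_lt⟩
  unfold frac
  rw [key, hie, Finset.sum_div]
  exact Finset.sum_congr rfl fun K _ => mul_div_assoc _ _ _

/-- For an `n`-simplex `σ` in Euclidean space (`n` odd, `n ≥ 3`) and an (even)
`p`-face `τ` of `σ` with `0 ≤ p ≤ n-2`,
`α(τ, σ) - (1/2) Σ_{i=p+1}^{n-2} (-1)^{i+1} Σ_{σ ≻ η^i ≻ τ} α(η^i, σ)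
  = 1/2 - (n-p)/4`. -/
theorem angle_sum_simplex {N n p : ℕ} (hn : 3 ≤ n) (hodd : Odd n) (hpeven : Even p)
    (hp : p ≤ n - 2) (σ τ : Finset (Euc N))
    (hind : AffineIndependent ℝ ((↑) : σ → Euc N)) (hσcard : σ.card = n + 1)
    (hτ : τ ⊆ σ) (hτcard : τ.card = p + 1) :
    solidAngle τ σ - 1 / 2 *
        ∑ i ∈ Finset.Icc (p + 1) (n - 2), (-1 : ℝ) ^ (i + 1) *
          ∑ᶠ η ∈ {η : Finset (Euc N) | η ⊆ σ ∧ η.card = i + 1 ∧ τ ⊆ η},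
            solidAngle η σ =
      1 / 2 - ((n : ℝ) - (p : ℝ)) / 4 := by
  obtain ⟨q, rfl⟩ : ∃ q, n = p + q + 3 := by
    obtain ⟨a, rfl⟩ := hodd
    obtain ⟨c, rfl⟩ := hpeven
    exact ⟨2 * a + 1 - (c + c) - 3, by omega⟩
  have hqe : Even q := by
    obtain ⟨a, ha⟩ := hodd
    obtain ⟨c, hc⟩ := hpeven
    exact ⟨a - c - 1, by omega⟩
  have hσne : σ.Nonempty := Finset.card_pos.mp (by omega)
  have hτne : τ.Nonempty := Finset.card_pos.mp (by omega)
  obtain ⟨f, h1, h2⟩ := exists_coords σ hind hσne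
  have hS := solidAngle_eq σ f h1 h2
  set M : Euc N → Euc N →ₗ[ℝ] ℝ := fun u => (f u).linear with hMdef
  have hM : ∀ u ∈ σ, M u ≠ 0 := by
    intro u hu h0
    obtain ⟨v, hv, hvu⟩ := Finset.exists_mem_ne (s := σ) (by omega) u
    have := (f u).linearMap_vsub u v
    rw [h1 u hu u hu, h1 u hu v hv, if_pos rfl, if_neg (Ne.symm hvu)] at this
    have h0' : (f u).linear = 0 := h0
    rw [h0'] at this
    simp at this
  set J := σ \ τ with hJ
  have hJσ : J ⊆ σ := Finset.sdiff_subset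
  have hJcard : J.card = q + 3 := by
    rw [hJ, Finset.card_sdiff_of_subset hτ]; omega
  have hempty : frac M ∅ = 1 := by
    simp [frac, (ball_pos (N := N)).ne']
  have hsing : ∀ u ∈ σ, frac M {u} = 1 / 2 := by
    intro u hu
    have := frac_symm M {u} (by simpa using hM u hu)
    rw [← insert_empty_eq, Finset.sum_powerset_insert (Finset.notMem_empty u)] at this
    simp [hempty] at this
    linarith
  have hmain := frac_symm M J fun u hu => hM u (hJσ hu)
  have hG : ∀ k, ∑ K ∈ Finset.powersetCard k J, (-1 : ℝ) ^ K.card * frac M K =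
      (-1 : ℝ) ^ k * ∑ K ∈ Finset.powersetCard k J, frac M K := by
    intro k
    rw [Finset.mul_sum]
    exact Finset.sum_congr rfl fun K hK => by rw [(Finset.mem_powersetCard.mp hK).2]
  rw [Finset.sum_powerset, hJcard, Finset.sum_congr rfl fun k _ => hG k,
    Finset.sum_range_succ, Finset.sum_range_succ', Finset.sum_range_succ'] at hmain
  have hGtop : ∑ K ∈ Finset.powersetCard (q + 3) J, frac M K = frac M J := by
    rw [← hJcard, Finset.powersetCard_self, Finset.sum_singleton]
  have hG1 : ∑ K ∈ Finset.powersetCard (0 + 1) J, frac M K = (q + 3) / 2 := by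
    rw [zero_add, Finset.powersetCard_one, Finset.sum_map]
    refine (Finset.sum_congr rfl fun u hu => hsing u (hJσ hu)).trans ?_
    rw [Finset.sum_const, hJcard, nsmul_eq_mul]
    push_cast
    ring
  have hG0 : ∑ K ∈ Finset.powersetCard 0 J, frac M K = 1 := by
    rw [Finset.powersetCard_zero, Finset.sum_singleton, hempty]
  have hin : ∀ k ∈ Finset.range (q + 1),
      ∑ᶠ η ∈ {η : Finset (Euc N) | η ⊆ σ ∧ η.card = (p + q + 1 - k) + 1 ∧ τ ⊆ η},
        solidAngle η σ = ∑ K ∈ Finset.powersetCard (k + 1 + 1) J, frac M K := by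
    intro k hk
    rw [Finset.mem_range] at hk
    rw [← finsum_mem_coe_finset]
    refine finsum_mem_eq_of_bijOn (fun η => σ \ η) ⟨?_, ?_, ?_⟩ ?_
    · rintro η ⟨ha, hb, hc⟩
      simp only [Finset.mem_coe,
        Finset.mem_powersetCard]
      refine ⟨Finset.sdiff_subset_sdiff le_rfl hc, ?_⟩
      rw [Finset.card_sdiff_of_subset ha]; omega
    · rintro η ⟨ha, hb, hc⟩ η' ⟨ha', hb', hc'⟩ h
      have h' : σ \ η = σ \ η' := h
      rw [← Finset.sdiff_sdiff_eq_self ha, h', Finset.sdiff_sdiff_eq_self ha']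
    · intro K hK
      have hK' := Finset.mem_powersetCard.mp (Finset.mem_coe.mp hK)
      have hKσ := hK'.1.trans hJσ
      refine ⟨σ \ K, ⟨Finset.sdiff_subset, ?_, ?_⟩, Finset.sdiff_sdiff_eq_self hKσ⟩
      · rw [Finset.card_sdiff_of_subset hKσ]; omega
      · intro x hx
        exact Finset.mem_sdiff.mpr ⟨hτ hx, fun h => (Finset.mem_sdiff.mp (hK'.1 h)).2 hx⟩
    · rintro η ⟨ha, hb, hc⟩
      exact hS η ha (Finset.card_pos.mp (by omega))
  have hsum : ∑ i ∈ Finset.Icc (p + 1) (p + q + 3 - 2), (-1 : ℝ) ^ (i + 1) *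
          ∑ᶠ η ∈ {η : Finset (Euc N) | η ⊆ σ ∧ η.card = i + 1 ∧ τ ⊆ η}, solidAngle η σ =
      ∑ k ∈ Finset.range (q + 1), (-1 : ℝ) ^ (k + 1 + 1) *
        ∑ K ∈ Finset.powersetCard (k + 1 + 1) J, frac M K := by
    symm
    refine Finset.sum_bij' (fun k _ => p + q + 1 - k) (fun i _ => p + q + 1 - i) ?_ ?_ ?_ ?_ ?_
    · intro k hk; simp only [Finset.mem_range, Finset.mem_Icc] at *; omega
    · intro k hk; simp only [Finset.mem_range, Finset.mem_Icc] at *; omega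
    · intro k hk; simp only [Finset.mem_range, Finset.mem_Icc] at *; omega
    · intro k hk; simp only [Finset.mem_range, Finset.mem_Icc] at *; omega
    · intro k hk
      rw [hin k hk]
      congr 1
      rw [Finset.mem_range] at hk
      obtain ⟨a, ha⟩ := hqe
      obtain ⟨c, hc⟩ := hpeven
      obtain ⟨d, hd⟩ : ∃ d, p + q + 1 - k = d := ⟨_, rfl⟩
      rw [hd]
      rcases Nat.even_or_odd k with hk2 | hk2
      · rw [Even.neg_one_pow (by grind), Even.neg_one_pow (by grind)]
      · rw [Odd.neg_one_pow (by grind), Odd.neg_one_pow (by grind)]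
  have hpow : (-1 : ℝ) ^ (q + 3) = -1 := by
    apply Odd.neg_one_pow
    obtain ⟨c, hc⟩ := hqe
    exact ⟨c + 1, by omega⟩
  rw [hGtop, hG1, hG0, hpow] at hmain
  rw [hsum, hS τ hτ hτne, ← hJ]
  push_cast
  linarith

end AngleDefectPaper
end
end
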